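/- Let d > 3 be an integer, ε ≠ 0 and τ ∈ ℝ. Let V : ℝ^d → ℝ be nonnegative, continuously differentiable away from the origin, with γ·V(x) + |x|·∂_rV(x) ≤ (1−η)(d−1)(d−3)/(2|x|²) for some γ > 0, η > 0 and all x ≠ 0. If u is a classical solution of −Δu + V u ± iεu − τu = f with u, ∇u ∈ L²(ℝ^d) and f ∈ L²(ℝ^d), then ‖∇u‖²_X + ∫_{ℝ^d} (V(x)/|x|)|u(x)|² dx + sup_{R>0} R^{−3}∫_{B(0,R)} |u(x)|² dx + (d−3)∫_{ℝ^d} |u(x)|²/|x|³ dx ≤ C‖f‖²_{X*} + (1/4)(|ε| + max{0,τ})‖u‖²_X, with C depending only on d, γ, η. -/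

import Mathlib

/-!
Test the equation with the Morawetz multiplier `∇ψ·∇u + ½ Δψ u` for the convex weight
`ψ x = √(a² + ‖x‖²)`, taking real parts. The Hessian of `ψ` contributes a multiple of `|∇u|²` which
is of size `1 / a` on the ball of radius `a`, and the radial condition on `V` lets `-Δ²ψ` absorb
the potential: the loss is at most `1 - η` times the limit, as `a → 0`, of what `-Δ²ψ` provides.
Letting `a → 0` therefore bounds `∫ |u|² / |x|³` and `∫ V |u|² / |x|`, and then `a = R` bounds
`R⁻¹ ∫_{B(0,R)} |∇u|²`, all by `∫ |f| (|∇u| + |u| / |x|) + |ε| ∫ |u| |∇u|`. Testing with `u` and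
with `± i u` gives `|ε| ∫ |u| |∇u| ≤ (|ε| + max 0 τ)^{1/2} ∫ |f| |u|`. Cauchy–Schwarz on dyadic
shells bounds each pairing with `f` by `‖f‖_{X*}` times the square root of a quantity on one of the
two sides of the estimate, and Young's inequality concludes. Integrations by parts are performed
with cutoffs away from the origin and infinity, where the flux of the currents vanishes in the mean.
-/

noncomputable section
open MeasureTheory Metric Set ENNReal

abbrev Ed (d : ℕ) := EuclideanSpace ℝ (Fin d)

/-- partial derivative of a complex valued function -/
def pd {d : ℕ} (u : Ed d → ℂ) (i : Fin d) (x : Ed d) : ℂ :=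
  fderiv ℝ u x (EuclideanSpace.single i 1)

/-- Laplacian of a complex valued function -/
def lap {d : ℕ} (u : Ed d → ℂ) (x : Ed d) : ℂ :=
  ∑ i, fderiv ℝ (pd u i) x (EuclideanSpace.single i 1)

/-- squared norm of the gradient, as an extended nonnegative real -/
def gradSq {d : ℕ} (u : Ed d → ℂ) (x : Ed d) : ℝ≥0∞ :=
  ∑ i, (‖pd u i x‖₊ : ℝ≥0∞) ^ 2

/-- |u(x)|² as an extended nonnegative real -/
def usq {d : ℕ} (u : Ed d → ℂ) (x : Ed d) : ℝ≥0∞ := (‖u x‖₊ : ℝ≥0∞) ^ 2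

/-- radial derivative ∂_r V (x) = (x/|x|)·∇V(x) -/
def radialDeriv {d : ℕ} (V : Ed d → ℝ) (x : Ed d) : ℝ :=
  fderiv ℝ V x x / ‖x‖

/-- Morrey–Campanato type quantity sup_{R>0} (1/R) ∫_{B(0,R)} g -/
def nX2 {d : ℕ} (g : Ed d → ℝ≥0∞) : ℝ≥0∞ :=
  ⨆ (R : ℝ) (_ : 0 < R), (ENNReal.ofReal R)⁻¹ * ∫⁻ x in ball (0 : Ed d) R, g x

/-- dyadic shell C_j -/
def shell (d : ℕ) (j : ℤ) : Set (Ed d) := {x | (2:ℝ)^j < ‖x‖ ∧ ‖x‖ ≤ (2:ℝ)^(j+1)}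

/-- the dual norm ‖f‖_{X*} applied to g = |f|² -/
def nXstar {d : ℕ} (g : Ed d → ℝ≥0∞) : ℝ≥0∞ :=
  ∑' j : ℤ, (ENNReal.ofReal ((2:ℝ)^(j+1)) * ∫⁻ x in shell d j, g x) ^ (1/2 : ℝ)

/-- the index j₀ with 2^{j₀} < ρ ≤ 2^{j₀+1} -/
def jIdx (ρ : ℝ) : ℤ := ⌈Real.logb 2 ρ⌉ - 1

/-- sup_{R ≥ ρ} (1/R)∫_{B(0,R)} g -/
def nX2r {d : ℕ} (ρ : ℝ) (g : Ed d → ℝ≥0∞) : ℝ≥0∞ :=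
  ⨆ (R : ℝ) (_ : ρ ≤ R), (ENNReal.ofReal R)⁻¹ * ∫⁻ x in ball (0 : Ed d) R, g x

/-- the dual norm ‖f‖_{X*_ρ} applied to g = |f|² -/
def nXstarr {d : ℕ} (ρ : ℝ) (g : Ed d → ℝ≥0∞) : ℝ≥0∞ :=
  (∑' j : {j : ℤ // jIdx ρ ≤ j},
    (ENNReal.ofReal ((2:ℝ)^((j:ℤ)+1)) * ∫⁻ x in shell d (j:ℤ), g x) ^ (1/2 : ℝ))
  + (ENNReal.ofReal ρ * ∫⁻ x in ball (0 : Ed d) ρ, g x) ^ (1/2 : ℝ)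

/-- integral of g over the sphere of radius R w.r.t. (d-1)-dimensional Hausdorff measure -/
def sphInt {d : ℕ} (R : ℝ) (g : Ed d → ℝ≥0∞) : ℝ≥0∞ :=
  ∫⁻ x in Metric.sphere (0 : Ed d) R, g x ∂(μH[(d:ℝ) - 1])

open Filter Topology Module InnerProductSpace

section Fatou

variable {α : Type*} [MeasurableSpace α] {μ : Measure α}

lemma integrable_and_integral_le_of_tendsto {g : ℕ → α → ℝ} {h : α → ℝ} {K : ℝ}
    (hg : ∀ n, Integrable (g n) μ) (hg_nonneg : ∀ n, 0 ≤ᵐ[μ] g n)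
    (hK : ∀ K' > K, ∀ᶠ n in atTop, ∫ x, g n x ∂μ ≤ K')
    (hlim : ∀ᵐ x ∂μ, Tendsto (fun n => g n x) atTop (𝓝 (h x))) :
    Integrable h μ ∧ ∫ x, h x ∂μ ≤ K := by
  have h_nonneg : 0 ≤ᵐ[μ] h := by
    filter_upwards [hlim, ae_all_iff.2 hg_nonneg] with x hx hx0
    exact ge_of_tendsto' hx hx0
  have h_meas : AEStronglyMeasurable h μ :=
    aestronglyMeasurable_of_tendsto_ae _ (fun n => (hg n).1) hlim
  have fatou (K' : ℝ) (hK' : K < K') : ∫⁻ x, ENNReal.ofReal (h x) ∂μ ≤ ENNReal.ofReal K' := calc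
    ∫⁻ x, ENNReal.ofReal (h x) ∂μ
        = ∫⁻ x, liminf (fun n => ENNReal.ofReal (g n x)) atTop ∂μ := lintegral_congr_ae <| by
          filter_upwards [hlim] with x hx using (ENNReal.tendsto_ofReal hx).liminf_eq.symm
    _ ≤ liminf (fun n => ∫⁻ x, ENNReal.ofReal (g n x) ∂μ) atTop :=
          lintegral_liminf_le' fun n => (hg n).1.aemeasurable.ennreal_ofReal
    _ ≤ ENNReal.ofReal K' := by
          refine liminf_le_of_frequently_le' (Eventually.frequently ?_)
          filter_upwards [hK K' hK'] with n hn
          rw [← ofReal_integral_eq_lintegral_ofReal (hg n) (hg_nonneg n)]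
          exact ENNReal.ofReal_le_ofReal hn
  have h_int : Integrable h μ := by
    refine ⟨h_meas, (hasFiniteIntegral_iff_ofReal h_nonneg).2 ?_⟩
    exact (fatou (K + 1) (lt_add_one K)).trans_lt ENNReal.ofReal_lt_top
  have K_nonneg : 0 ≤ K := by
    refine le_of_forall_gt_imp_ge_of_dense fun K' hK' => ?_
    obtain ⟨n, hn⟩ := (hK K' hK').exists
    exact (integral_nonneg_of_ae (hg_nonneg n)).trans hn
  refine ⟨h_int, le_of_forall_gt_imp_ge_of_dense fun K' hK' => ?_⟩
  rw [← ENNReal.ofReal_le_ofReal_iff (K_nonneg.trans hK'.le),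
    ofReal_integral_eq_lintegral_ofReal h_int h_nonneg]
  exact fatou K' hK'

end Fatou

section Cutoff

variable {E : Type*} [NormedAddCommGroup E] [InnerProductSpace ℝ E]

/-- A smooth bump equal to `1` on the unit ball and supported in the ball of radius `2`. -/
def unitBump (E : Type*) [NormedAddCommGroup E] [InnerProductSpace ℝ E] :
    ContDiffBump (0 : E) :=
  ⟨1, 2, one_pos, one_lt_two⟩

/-- A smooth cutoff supported in the annulus `1 / (n + 1) ≤ ‖x‖ ≤ 2 (n + 1)`. It is used to
integrate by parts for fields which are only regular away from the origin. -/
def annulusCutoff (n : ℕ) (x : E) : ℝ :=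
  unitBump E ((n + 1 : ℝ)⁻¹ • x) * (1 - unitBump E ((n + 1 : ℝ) • x))

lemma annulusCutoff_nonneg (n : ℕ) (x : E) : 0 ≤ annulusCutoff n x :=
  mul_nonneg (unitBump E).nonneg (sub_nonneg.2 (unitBump E).le_one)

lemma annulusCutoff_le_one (n : ℕ) (x : E) : annulusCutoff n x ≤ 1 :=
  mul_le_one₀ (unitBump E).le_one (sub_nonneg.2 (unitBump E).le_one)
    (sub_le_self _ (unitBump E).nonneg)

lemma contDiff_annulusCutoff (n : ℕ) : ContDiff ℝ 1 (annulusCutoff n : E → ℝ) :=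
  ((unitBump E).contDiff.comp (contDiff_const_smul _)).mul
    (contDiff_const.sub ((unitBump E).contDiff.comp (contDiff_const_smul _)))

lemma zero_notMem_tsupport_annulusCutoff (n : ℕ) :
    (0 : E) ∉ tsupport (annulusCutoff n : E → ℝ) := by
  rw [notMem_tsupport_iff_eventuallyEq]
  have h_tendsto : Tendsto (fun x : E => (n + 1 : ℝ) • x) (𝓝 0) (𝓝 0) :=
    Continuous.tendsto' (by fun_prop) _ _ (smul_zero _)
  filter_upwards [h_tendsto.eventually (unitBump E).eventuallyEq_one] with x hx
  simp [annulusCutoff, hx]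

lemma annulusCutoff_eventuallyEq_one {x : E} (hx : x ≠ 0) :
    ∀ᶠ n : ℕ in atTop, (annulusCutoff n : E → ℝ) =ᶠ[𝓝 x] 1 := by
  have hx_pos : 0 < ‖x‖ := norm_pos_iff.2 hx
  filter_upwards [eventually_gt_atTop ⌈‖x‖⌉₊, eventually_gt_atTop ⌈2 / ‖x‖⌉₊] with n h_out h_in
  replace h_out : ‖x‖ < n + 1 := (Nat.lt_of_ceil_lt h_out).trans (lt_add_one _)
  replace h_in : 2 / ‖x‖ < n + 1 := (Nat.lt_of_ceil_lt h_in).trans (lt_add_one _)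
  have hn : (0 : ℝ) < n + 1 := by positivity
  filter_upwards [continuous_norm.continuousAt.eventually (gt_mem_nhds h_out),
    continuous_norm.continuousAt.eventually
      (lt_mem_nhds (show 2 / (n + 1 : ℝ) < ‖x‖ by rwa [div_lt_comm₀ hn hx_pos]))] with y hy hy'
  have h_one : unitBump E ((n + 1 : ℝ)⁻¹ • y) = 1 := by
    refine (unitBump E).one_of_mem_closedBall ?_
    rw [mem_closedBall_zero_iff, norm_smul, Real.norm_of_nonneg (by positivity)]
    exact (inv_mul_le_one₀ hn).2 hy.le
  have h_zero : unitBump E ((n + 1 : ℝ) • y) = 0 := by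
    refine (unitBump E).zero_of_le_dist ?_
    rw [dist_zero_right, norm_smul, Real.norm_of_nonneg hn.le]
    exact ((div_lt_iff₀' hn).1 hy').le
  simp [annulusCutoff, h_one, h_zero]

lemma tendsto_annulusCutoff {x : E} (hx : x ≠ 0) :
    Tendsto (fun n : ℕ => annulusCutoff n x) atTop (𝓝 1) :=
  tendsto_const_nhds.congr' <| (annulusCutoff_eventuallyEq_one hx).mono fun _ h => h.eq_of_nhds.symm

lemma tendsto_fderiv_annulusCutoff {x : E} (hx : x ≠ 0) :
    Tendsto (fun n : ℕ => fderiv ℝ (annulusCutoff n) x) atTop (𝓝 0) :=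
  tendsto_const_nhds.congr' <| (annulusCutoff_eventuallyEq_one hx).mono fun _ h => by
    simp [h.fderiv_eq]

variable [FiniteDimensional ℝ E]

lemma hasCompactSupport_annulusCutoff (n : ℕ) :
    HasCompactSupport (annulusCutoff n : E → ℝ) :=
  ((unitBump E).hasCompactSupport.comp_smul (by positivity)).mul_right

lemma exists_norm_fderiv_unitBump_smul_le :
    ∃ M, 0 ≤ M ∧ ∀ (c : ℝ) (x : E), x ≠ 0 →
      ‖fderiv ℝ (fun y => unitBump E (c • y)) x‖ ≤ M * ‖x‖⁻¹ := by
  have h_diff : ContDiff ℝ 1 (unitBump E) := (unitBump E).contDiff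
  have h_cont : Continuous fun y => ‖y‖ • fderiv ℝ (unitBump E) y :=
    continuous_norm.smul (h_diff.continuous_fderiv one_ne_zero)
  have h_supp : HasCompactSupport fun y => ‖y‖ • fderiv ℝ (unitBump E) y :=
    ((unitBump E).hasCompactSupport.fderiv ℝ).smul_left (f := fun y : E => ‖y‖)
  obtain ⟨M, hM⟩ := h_cont.bounded_above_of_compact_support h_supp
  refine ⟨M, (norm_nonneg _).trans (hM 0), fun c x hx => ?_⟩
  rw [fderiv_comp_smul, le_mul_inv_iff₀ (norm_pos_iff.2 hx)]
  calc ‖c • fderiv ℝ (unitBump E) (c • x)‖ * ‖x‖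
      = ‖‖c • x‖ • fderiv ℝ (unitBump E) (c • x)‖ := by
        rw [norm_smul, norm_smul, norm_norm, norm_smul]; ring
    _ ≤ M := hM _

lemma exists_norm_fderiv_annulusCutoff_le :
    ∃ M, ∀ (n : ℕ) (x : E), x ≠ 0 → ‖fderiv ℝ (annulusCutoff n) x‖ ≤ M * ‖x‖⁻¹ := by
  obtain ⟨M, -, hM⟩ := exists_norm_fderiv_unitBump_smul_le (E := E)
  refine ⟨2 * M, fun n x hx => ?_⟩
  have h_diff (c : ℝ) : DifferentiableAt ℝ (fun y => unitBump E (c • y)) x :=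
    ((unitBump E).contDiff (n := 1)).differentiable one_ne_zero |>.comp
      (differentiable_id.const_smul c) |>.differentiableAt
  have h_bump (c : ℝ) : |unitBump E (c • x)| ≤ 1 := by
    rw [abs_of_nonneg (unitBump E).nonneg]; exact (unitBump E).le_one
  have h_one_sub (c : ℝ) : |1 - unitBump E (c • x)| ≤ 1 := by
    rw [abs_of_nonneg (sub_nonneg.2 (unitBump E).le_one)]
    exact sub_le_self _ (unitBump E).nonneg
  unfold annulusCutoff
  rw [fderiv_fun_mul (h_diff _) ((h_diff _).const_sub 1), fderiv_const_sub]
  refine (norm_add_le _ _).trans ?_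
  rw [norm_smul, norm_smul, norm_neg, two_mul, add_mul]
  exact add_le_add
    ((mul_le_of_le_one_left (norm_nonneg _) (h_bump _)).trans (hM _ x hx))
    ((mul_le_of_le_one_left (norm_nonneg _) (h_one_sub _)).trans (hM _ x hx))

end Cutoff

section Divergence

variable {d : ℕ}

lemma aestronglyMeasurable_of_continuousOn_compl_singleton {X Y : Type*} [TopologicalSpace X]
    [MeasurableSpace X] [OpensMeasurableSpace X] [MeasurableSingletonClass X] {μ : Measure X}
    [NullSingletonClass μ] [TopologicalSpace Y] [TopologicalSpace.PseudoMetrizableSpace Y]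
    [SecondCountableTopology Y] {g : X → Y} {a : X} (hg : ContinuousOn g {a}ᶜ) :
    AEStronglyMeasurable g μ := by
  have h_ae : ∀ᵐ x ∂μ, x ∈ ({a}ᶜ : Set X) := Measure.ae_ne μ a
  rw [← Measure.restrict_eq_self_of_ae_mem h_ae]
  exact hg.aestronglyMeasurable (measurableSet_singleton a).compl

lemma integrable_mul_of_tsupport_subset {X : Type*} [TopologicalSpace X] [MeasurableSpace X]
    [OpensMeasurableSpace X] {μ : Measure X} [IsFiniteMeasureOnCompacts μ] {χ g : X → ℝ} {U : Set X}
    (hU : IsOpen U) (hχ : Continuous χ) (hχ_supp : HasCompactSupport χ) (hχU : tsupport χ ⊆ U)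
    (hg : ContinuousOn g U) : Integrable (fun x => χ x * g x) μ := by
  have h_supp : tsupport (fun x => χ x * g x) ⊆ tsupport χ := tsupport_mul_subset_left
  refine Continuous.integrable_of_hasCompactSupport ?_ hχ_supp.mul_right
  refine continuous_of_tsupport fun x hx => hχ.continuousAt.mul ?_
  exact hg.continuousAt (hU.mem_nhds (hχU (h_supp hx)))

/-- The divergence `∑ⱼ ∂ⱼFⱼ` of the vector field with components `F j`. -/
def divergence (F : Fin d → Ed d → ℝ) (x : Ed d) : ℝ :=
  ∑ j, fderiv ℝ (F j) x (EuclideanSpace.single j 1)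

lemma continuousOn_divergence {F : Fin d → Ed d → ℝ} {U : Set (Ed d)} (hU : IsOpen U)
    (hF : ∀ j, ContDiffOn ℝ 1 (F j) U) : ContinuousOn (divergence F) U :=
  continuousOn_finsetSum _ fun j _ =>
    ((hF j).continuousOn_fderiv_of_isOpen hU le_rfl).clm_apply continuousOn_const

lemma integral_mul_divergence {F : Fin d → Ed d → ℝ} {χ : Ed d → ℝ} {U : Set (Ed d)}
    (hU : IsOpen U) (hF : ∀ j, ContDiffOn ℝ 1 (F j) U) (hχ : ContDiff ℝ 1 χ)
    (hχ_supp : HasCompactSupport χ) (hχU : tsupport χ ⊆ U) :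
    ∫ x, χ x * divergence F x =
      -∑ j, ∫ x, fderiv ℝ χ x (EuclideanSpace.single j 1) * F j x := by
  have h_int {g : Ed d → ℝ} (hg : ContinuousOn g U) : Integrable fun x => χ x * g x :=
    integrable_mul_of_tsupport_subset hU hχ.continuous hχ_supp hχU hg
  have h_int_fderiv (j : Fin d) :
      Integrable fun x => fderiv ℝ χ x (EuclideanSpace.single j 1) * F j x :=
    integrable_mul_of_tsupport_subset hU (by fun_prop (disch := simp))
      (hχ_supp.fderiv_apply ℝ _) ((tsupport_fderiv_apply_subset ℝ _).trans hχU) (hF j).continuousOn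
  have h_cont (j : Fin d) :
      ContinuousOn (fun x => fderiv ℝ (F j) x (EuclideanSpace.single j 1)) U :=
    ((hF j).continuousOn_fderiv_of_isOpen hU le_rfl).clm_apply continuousOn_const
  simp_rw [divergence, Finset.mul_sum]
  rw [integral_finsetSum _ fun j _ => h_int (h_cont j), ← Finset.sum_neg_distrib]
  refine Finset.sum_congr rfl fun j _ => ?_
  refine integral_mul_fderiv_eq_neg_fderiv_mul_of_integrable (h_int_fderiv j) (h_int (h_cont j))
    (h_int (hF j).continuousOn) (fun x _ => hχ.differentiable one_ne_zero x) fun x hx => ?_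
  exact ((hF j).differentiableOn one_ne_zero).differentiableAt (hU.mem_nhds (hχU hx))

/-- A vector field, regular away from the origin, whose flux through the spheres `‖x‖ = R` vanishes
in the mean both as `R → 0` and as `R → ∞`. -/
structure HasNegligibleFlux (F : Fin d → Ed d → ℝ) : Prop where
  contDiffOn : ∀ j, ContDiffOn ℝ 1 (F j) {0}ᶜ
  integrable : ∀ j, Integrable fun x => ‖x‖⁻¹ * F j x

lemma HasNegligibleFlux.add {F G : Fin d → Ed d → ℝ} (hF : HasNegligibleFlux F)
    (hG : HasNegligibleFlux G) : HasNegligibleFlux fun j x => F j x + G j x where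
  contDiffOn j := (hF.contDiffOn j).add (hG.contDiffOn j)
  integrable j := by
    simp only [mul_add]; exact (hF.integrable j).add (hG.integrable j)

lemma HasNegligibleFlux.sub {F G : Fin d → Ed d → ℝ} (hF : HasNegligibleFlux F)
    (hG : HasNegligibleFlux G) : HasNegligibleFlux fun j x => F j x - G j x where
  contDiffOn j := (hF.contDiffOn j).sub (hG.contDiffOn j)
  integrable j := by
    simp only [mul_sub]; exact (hF.integrable j).sub (hG.integrable j)

lemma integrable_annulusCutoff_mul {g : Ed d → ℝ} (hg : ContinuousOn g {0}ᶜ) (n : ℕ) :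
    Integrable fun x => annulusCutoff n x * g x :=
  integrable_mul_of_tsupport_subset isOpen_compl_singleton (contDiff_annulusCutoff n).continuous
    (hasCompactSupport_annulusCutoff n)
    (subset_compl_singleton_iff.2 (zero_notMem_tsupport_annulusCutoff n)) hg

variable [NeZero d] {F : Fin d → Ed d → ℝ}

lemma HasNegligibleFlux.tendsto_integral_annulusCutoff_mul_divergence (hF : HasNegligibleFlux F) :
    Tendsto (fun n => ∫ x, annulusCutoff n x * divergence F x) atTop (𝓝 0) := by
  simp_rw [fun n => integral_mul_divergence isOpen_compl_singleton hF.contDiffOn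
    (contDiff_annulusCutoff n) (hasCompactSupport_annulusCutoff n)
    (subset_compl_singleton_iff.2 (zero_notMem_tsupport_annulusCutoff n))]
  rw [show (0 : ℝ) = -∑ _j : Fin d, ∫ _x : Ed d, (0 : ℝ) by simp]
  refine (tendsto_finsetSum _ fun j _ => ?_).neg
  obtain ⟨M, hM⟩ := exists_norm_fderiv_annulusCutoff_le (E := Ed d)
  refine tendsto_integral_of_dominated_convergence (fun x => M * ‖‖x‖⁻¹ * F j x‖) (fun n => ?_)
    ((hF.integrable j).norm.const_mul M) (fun n => ?_) ?_
  · have h_cont : Continuous fun x : Ed d =>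
        fderiv ℝ (annulusCutoff n) x (EuclideanSpace.single j 1) :=
      ((contDiff_annulusCutoff n).continuous_fderiv one_ne_zero).clm_apply continuous_const
    exact aestronglyMeasurable_of_continuousOn_compl_singleton
      (h_cont.continuousOn.mul (hF.contDiffOn j).continuousOn)
  · filter_upwards [Measure.ae_ne volume (0 : Ed d)] with x hx
    calc ‖fderiv ℝ (annulusCutoff n) x (EuclideanSpace.single j 1) * F j x‖
        ≤ ‖fderiv ℝ (annulusCutoff n) x‖ * ‖F j x‖ := by
          rw [norm_mul]
          gcongr
          simpa using (fderiv ℝ (annulusCutoff n) x).le_opNorm (EuclideanSpace.single j 1)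
      _ ≤ M * ‖x‖⁻¹ * ‖F j x‖ := by gcongr; exact hM n x hx
      _ = M * ‖‖x‖⁻¹ * F j x‖ := by rw [norm_mul, norm_inv, norm_norm, mul_assoc]
  · filter_upwards [Measure.ae_ne volume (0 : Ed d)] with x hx
    have h_apply : Tendsto
        (fun n => fderiv ℝ (annulusCutoff n) x (EuclideanSpace.single j 1)) atTop (𝓝 0) :=
      ((ContinuousLinearMap.apply ℝ ℝ (EuclideanSpace.single j (1 : ℝ))).continuous.tendsto _).comp
        (tendsto_fderiv_annulusCutoff hx)
    simpa using h_apply.mul_const (F j x)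

lemma tendsto_integral_annulusCutoff_mul {g : Ed d → ℝ} (hg : Integrable g) :
    Tendsto (fun n => ∫ x, annulusCutoff n x * g x) atTop (𝓝 (∫ x, g x)) := by
  refine tendsto_integral_of_dominated_convergence (fun x => ‖g x‖)
    (fun n => (contDiff_annulusCutoff n).continuous.aestronglyMeasurable.mul hg.1) hg.norm
    (fun n => ae_of_all _ fun x => ?_) ?_
  · rw [norm_mul, Real.norm_of_nonneg (annulusCutoff_nonneg n x)]
    exact mul_le_of_le_one_left (norm_nonneg _) (annulusCutoff_le_one n x)
  · filter_upwards [Measure.ae_ne volume (0 : Ed d)] with x hx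
    simpa using (tendsto_annulusCutoff hx).mul_const (g x)

lemma HasNegligibleFlux.integral_divergence_add_le (hF : HasNegligibleFlux F) {B : Ed d → ℝ}
    (hB : Integrable B) (h_nonneg : ∀ x ≠ 0, 0 ≤ divergence F x + B x) :
    Integrable (fun x => divergence F x + B x) ∧ ∫ x, divergence F x + B x ≤ ∫ x, B x := by
  have h_int_div (n : ℕ) : Integrable fun x => annulusCutoff n x * divergence F x :=
    integrable_annulusCutoff_mul (continuousOn_divergence isOpen_compl_singleton hF.contDiffOn) n
  have h_int_B (n : ℕ) : Integrable fun x => annulusCutoff n x * B x :=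
    hB.bdd_mul (c := 1) (contDiff_annulusCutoff n).continuous.aestronglyMeasurable
      (ae_of_all _ fun x => by
        rw [Real.norm_of_nonneg (annulusCutoff_nonneg n x)]; exact annulusCutoff_le_one n x)
  have h_lim : Tendsto (fun n => ∫ x, annulusCutoff n x * (divergence F x + B x)) atTop
      (𝓝 (∫ x, B x)) := by
    simp_rw [mul_add, fun n => integral_add (h_int_div n) (h_int_B n)]
    simpa using hF.tendsto_integral_annulusCutoff_mul_divergence.add
      (tendsto_integral_annulusCutoff_mul hB)
  refine integrable_and_integral_le_of_tendsto
    (g := fun n x => annulusCutoff n x * (divergence F x + B x)) (fun n => ?_) (fun n => ?_)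
    (fun K' hK' => (h_lim.eventually (gt_mem_nhds hK')).mono fun n hn => hn.le) ?_
  · simp only [mul_add]; exact (h_int_div n).add (h_int_B n)
  · filter_upwards [Measure.ae_ne volume (0 : Ed d)] with x hx
    exact mul_nonneg (annulusCutoff_nonneg n x) (h_nonneg x hx)
  · filter_upwards [Measure.ae_ne volume (0 : Ed d)] with x hx
    simpa using (tendsto_annulusCutoff hx).mul_const (divergence F x + B x)

lemma HasNegligibleFlux.integral_le_integral (hF : HasNegligibleFlux F) {A B : Ed d → ℝ}
    (hA : ContinuousOn A {0}ᶜ) (hA_nonneg : ∀ x ≠ 0, 0 ≤ A x) (hB : Integrable B)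
    (h_div : ∀ x ≠ 0, A x - B x ≤ divergence F x) : Integrable A ∧ ∫ x, A x ≤ ∫ x, B x := by
  have h_le : ∀ x ≠ 0, A x ≤ divergence F x + B x := fun x hx => by linarith [h_div x hx]
  have h_le_ae : A ≤ᵐ[volume] fun x => divergence F x + B x := by
    filter_upwards [Measure.ae_ne volume (0 : Ed d)] with x hx using h_le x hx
  obtain ⟨h_int, h_bound⟩ :=
    hF.integral_divergence_add_le hB fun x hx => (hA_nonneg x hx).trans (h_le x hx)
  have hA_int : Integrable A :=
    h_int.mono' (aestronglyMeasurable_of_continuousOn_compl_singleton hA) <| by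
      filter_upwards [h_le_ae, Measure.ae_ne volume (0 : Ed d)] with x hx hx0
      rwa [Real.norm_of_nonneg (hA_nonneg x hx0)]
  exact ⟨hA_int, (integral_mono_ae hA_int h_int h_le_ae).trans h_bound⟩

end Divergence

section DivergenceIdentities

variable {d : ℕ} {u : Ed d → ℂ}

lemma sum_coord_smul_map_single {W : Type*} [NormedAddCommGroup W] [NormedSpace ℝ W]
    (A : Ed d →L[ℝ] W) (x : Ed d) : ∑ j, x j • A (EuclideanSpace.single j 1) = A x := by
  conv_rhs => rw [← (EuclideanSpace.basisFun (Fin d) ℝ).sum_repr x]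
  simp

lemma divergence_eq_sum_of_hasFDerivAt {F : Fin d → Ed d → ℝ} {F' : Fin d → Ed d →L[ℝ] ℝ} {x : Ed d}
    (hF : ∀ j, HasFDerivAt (F j) (F' j) x) :
    divergence F x = ∑ j, F' j (EuclideanSpace.single j 1) :=
  Finset.sum_congr rfl fun j _ => by rw [(hF j).fderiv]

lemma divergence_add {F G : Fin d → Ed d → ℝ} {x : Ed d}
    (hF : ∀ j, DifferentiableAt ℝ (F j) x) (hG : ∀ j, DifferentiableAt ℝ (G j) x) :
    divergence (fun j y => F j y + G j y) x = divergence F x + divergence G x := by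
  rw [divergence_eq_sum_of_hasFDerivAt fun j => (hF j).hasFDerivAt.fun_add (hG j).hasFDerivAt]
  simp [divergence, Finset.sum_add_distrib]

lemma divergence_sub {F G : Fin d → Ed d → ℝ} {x : Ed d}
    (hF : ∀ j, DifferentiableAt ℝ (F j) x) (hG : ∀ j, DifferentiableAt ℝ (G j) x) :
    divergence (fun j y => F j y - G j y) x = divergence F x - divergence G x := by
  rw [divergence_eq_sum_of_hasFDerivAt fun j => (hF j).hasFDerivAt.fun_sub (hG j).hasFDerivAt]
  simp [divergence, Finset.sum_sub_distrib]

lemma divergence_mul {φ : Ed d → ℝ} {φ' : Ed d →L[ℝ] ℝ} {F : Fin d → Ed d → ℝ} {x : Ed d}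
    (hφ : HasFDerivAt φ φ' x) (hF : ∀ j, DifferentiableAt ℝ (F j) x) :
    divergence (fun j y => φ y * F j y) x =
      ∑ j, φ' (EuclideanSpace.single j 1) * F j x + φ x * divergence F x := by
  rw [divergence_eq_sum_of_hasFDerivAt fun j => hφ.fun_mul (hF j).hasFDerivAt]
  simp [divergence, Finset.sum_add_distrib, Finset.mul_sum, mul_comm, add_comm]

lemma divergence_radial_mul {φ : Ed d → ℝ} {c : ℝ} {F : Fin d → Ed d → ℝ} {x : Ed d}
    (hφ : HasFDerivAt φ (c • innerSL ℝ x) x) (hF : ∀ j, DifferentiableAt ℝ (F j) x) :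
    divergence (fun j y => φ y * F j y) x = c * ∑ j, x j * F j x + φ x * divergence F x := by
  rw [divergence_mul hφ hF]
  simp [EuclideanSpace.inner_single_right, Finset.mul_sum, mul_assoc]

/-- The squared length `∑ⱼ |∂ⱼu|²` of the gradient, as a real number. -/
def gradNormSq (u : Ed d → ℂ) (x : Ed d) : ℝ := ∑ j, ‖pd u j x‖ ^ 2

/-- The current `⟨z u, ∇u⟩` obtained by testing an equation for `Δu` against `z u`. -/
def energyCurrent (z : ℂ) (u : Ed d → ℂ) (j : Fin d) (x : Ed d) : ℝ := ⟪z * u x, pd u j x⟫_ℝ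

/-- Pohozaev's current `⟨x·∇u, ∇u⟩ - ½ |∇u|² x`; note that `x·∇u = fderiv ℝ u x x`. -/
def pohozaevCurrent (u : Ed d → ℂ) (j : Fin d) (x : Ed d) : ℝ :=
  ⟪fderiv ℝ u x x, pd u j x⟫_ℝ - 1 / 2 * (x j * gradNormSq u x)

/-- The radial current `|u|² x`. -/
def massCurrent (u : Ed d → ℂ) (j : Fin d) (x : Ed d) : ℝ := x j * ‖u x‖ ^ 2

lemma gradNormSq_nonneg (u : Ed d → ℂ) (x : Ed d) : 0 ≤ gradNormSq u x :=
  Finset.sum_nonneg fun _ _ => sq_nonneg _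

lemma norm_pd_le_sqrt_gradNormSq (u : Ed d → ℂ) (j : Fin d) (x : Ed d) :
    ‖pd u j x‖ ≤ √(gradNormSq u x) :=
  Real.le_sqrt_of_sq_le <|
    Finset.single_le_sum (f := fun i => ‖pd u i x‖ ^ 2) (fun _ _ => sq_nonneg _) (Finset.mem_univ j)

lemma norm_fderiv_apply_self_le (u : Ed d → ℂ) (x : Ed d) :
    ‖fderiv ℝ u x x‖ ≤ ‖x‖ * √(gradNormSq u x) := calc
  ‖fderiv ℝ u x x‖ = ‖∑ j, x j • pd u j x‖ := by rw [← sum_coord_smul_map_single]; rfl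
  _ ≤ ∑ j, ‖x j‖ * ‖pd u j x‖ := norm_sum_le_of_le _ fun j _ => norm_smul_le _ _
  _ ≤ √(∑ j, ‖x j‖ ^ 2) * √(∑ j, ‖pd u j x‖ ^ 2) := Real.sum_mul_le_sqrt_mul_sqrt _ _ _
  _ = ‖x‖ * √(gradNormSq u x) := by rw [EuclideanSpace.norm_eq, gradNormSq]

lemma sum_coord_mul_energyCurrent (z : ℂ) (u : Ed d → ℂ) (x : Ed d) :
    ∑ j, x j * energyCurrent z u j x = ⟪z * u x, fderiv ℝ u x x⟫_ℝ :=
  sum_coord_smul_map_single ((innerSL ℝ (z * u x)).comp (fderiv ℝ u x)) x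

lemma sum_coord_mul_pohozaevCurrent (u : Ed d → ℂ) (x : Ed d) :
    ∑ j, x j * pohozaevCurrent u j x =
      ‖fderiv ℝ u x x‖ ^ 2 - 1 / 2 * ‖x‖ ^ 2 * gradNormSq u x := by
  have h_inner : ∑ j, x j * ⟪fderiv ℝ u x x, pd u j x⟫_ℝ = ‖fderiv ℝ u x x‖ ^ 2 := by
    rw [← real_inner_self_eq_norm_sq]
    exact sum_coord_smul_map_single ((innerSL ℝ (fderiv ℝ u x x)).comp (fderiv ℝ u x)) x
  rw [← h_inner, EuclideanSpace.real_norm_sq_eq, Finset.mul_sum, Finset.sum_mul,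
    ← Finset.sum_sub_distrib]
  exact Finset.sum_congr rfl fun j _ => by rw [pohozaevCurrent]; ring

lemma contDiff_fderiv_of_two (hu : ContDiff ℝ 2 u) : ContDiff ℝ 1 (fderiv ℝ u) :=
  hu.fderiv_right (m := 1) (by norm_num)

lemma contDiff_pd (hu : ContDiff ℝ 2 u) (j : Fin d) : ContDiff ℝ 1 (pd u j) :=
  (contDiff_fderiv_of_two hu).clm_apply contDiff_const

lemma contDiff_gradNormSq (hu : ContDiff ℝ 2 u) : ContDiff ℝ 1 (gradNormSq u) :=
  ContDiff.sum fun j _ => (contDiff_pd hu j).norm_sq ℝ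

lemma contDiff_energyCurrent (hu : ContDiff ℝ 2 u) (z : ℂ) (j : Fin d) :
    ContDiff ℝ 1 (energyCurrent z u j) :=
  (contDiff_const.mul (hu.of_le one_le_two)).inner ℝ (contDiff_pd hu j)

lemma contDiff_pohozaevCurrent (hu : ContDiff ℝ 2 u) (j : Fin d) :
    ContDiff ℝ 1 (pohozaevCurrent u j) :=
  (((contDiff_fderiv_of_two hu).clm_apply contDiff_id).inner ℝ (contDiff_pd hu j)).sub
    (contDiff_const.mul ((by fun_prop : ContDiff ℝ 1 fun x : Ed d => x j).mul
      (contDiff_gradNormSq hu)))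

lemma contDiff_massCurrent (hu : ContDiff ℝ 2 u) (j : Fin d) : ContDiff ℝ 1 (massCurrent u j) :=
  (by fun_prop : ContDiff ℝ 1 fun x : Ed d => x j).mul ((hu.of_le one_le_two).norm_sq ℝ)

lemma hasFDerivAt_pd (hu : ContDiff ℝ 2 u) (j : Fin d) (x : Ed d) :
    HasFDerivAt (pd u j) ((fderiv ℝ (fderiv ℝ u) x).flip (EuclideanSpace.single j 1)) x := by
  have h_apply := ((contDiff_fderiv_of_two hu).differentiable one_ne_zero x).hasFDerivAt.clm_apply
    (hasFDerivAt_const (EuclideanSpace.single j (1 : ℝ)) x)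
  simp only [ContinuousLinearMap.comp_zero, zero_add] at h_apply
  exact h_apply

lemma lap_eq_sum_fderiv_fderiv (hu : ContDiff ℝ 2 u) (x : Ed d) :
    lap u x = ∑ j, fderiv ℝ (fderiv ℝ u) x (EuclideanSpace.single j 1)
      (EuclideanSpace.single j 1) :=
  Finset.sum_congr rfl fun j _ => by rw [(hasFDerivAt_pd hu j x).fderiv]; rfl

lemma hasFDerivAt_gradNormSq (hu : ContDiff ℝ 2 u) (x : Ed d) :
    HasFDerivAt (gradNormSq u) (∑ i, 2 • (innerSL ℝ (pd u i x)).comp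
      ((fderiv ℝ (fderiv ℝ u) x).flip (EuclideanSpace.single i 1))) x :=
  HasFDerivAt.fun_sum fun i _ => (hasFDerivAt_pd hu i x).norm_sq

lemma real_inner_mul_self_left (z w : ℂ) : ⟪z * w, w⟫_ℝ = z.re * ‖w‖ ^ 2 := by
  rw [Complex.inner, Complex.sq_norm, Complex.normSq_apply]; simp; ring

lemma divergence_energyCurrent (hu : ContDiff ℝ 2 u) (z : ℂ) (x : Ed d) :
    divergence (energyCurrent z u) x = z.re * gradNormSq u x + ⟪z * u x, lap u x⟫_ℝ := by
  rw [divergence_eq_sum_of_hasFDerivAt (F := energyCurrent z u) fun j =>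
    ((hu.differentiable two_ne_zero x).hasFDerivAt.const_mul z).inner ℝ (hasFDerivAt_pd hu j x),
    lap_eq_sum_fderiv_fderiv hu, inner_sum, gradNormSq, Finset.mul_sum, ← Finset.sum_add_distrib]
  refine Finset.sum_congr rfl fun j _ => ?_
  rw [← real_inner_mul_self_left, add_comm]
  rfl

lemma hasFDerivAt_fderiv_apply_self (hu : ContDiff ℝ 2 u) (x : Ed d) :
    HasFDerivAt (fun y => fderiv ℝ u y y)
      (fderiv ℝ u x + (fderiv ℝ (fderiv ℝ u) x).flip x) x :=
  ((contDiff_fderiv_of_two hu).differentiable one_ne_zero x).hasFDerivAt.clm_apply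
    (hasFDerivAt_id x)

lemma fderiv_pohozaevCurrent_single (hu : ContDiff ℝ 2 u) (j : Fin d) (x : Ed d) :
    fderiv ℝ (pohozaevCurrent u j) x (EuclideanSpace.single j 1) =
      ⟪fderiv ℝ u x x, fderiv ℝ (fderiv ℝ u) x (EuclideanSpace.single j 1)
          (EuclideanSpace.single j 1)⟫_ℝ
        + (‖pd u j x‖ ^ 2
          + ⟪fderiv ℝ (fderiv ℝ u) x (EuclideanSpace.single j 1) x, pd u j x⟫_ℝ)
        - 1 / 2 * gradNormSq u x
        - x j * ∑ i, ⟪pd u i x, fderiv ℝ (fderiv ℝ u) x (EuclideanSpace.single j 1)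
          (EuclideanSpace.single i 1)⟫_ℝ := by
  have h_deriv := ((hasFDerivAt_fderiv_apply_self hu x).inner ℝ (hasFDerivAt_pd hu j x)).sub
    (((EuclideanSpace.proj (𝕜 := ℝ) j).hasFDerivAt.mul (hasFDerivAt_gradNormSq hu x)).const_mul
      (1 / 2 : ℝ))
  rw [HasFDerivAt.fderiv (f := pohozaevCurrent u j) h_deriv, ← real_inner_self_eq_norm_sq,
    ← inner_add_left]
  simp [pd, fderivInnerCLM_apply, ← Finset.mul_sum, -Complex.inner]
  ring

/-- The Hessian terms produced by the two halves of the current cancel, by symmetry. -/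
lemma divergence_pohozaevCurrent (hu : ContDiff ℝ 2 u) (x : Ed d) :
    divergence (pohozaevCurrent u) x =
      ⟪fderiv ℝ u x x, lap u x⟫_ℝ - ((d : ℝ) - 2) / 2 * gradNormSq u x := by
  have h_symm (v w : Ed d) : fderiv ℝ (fderiv ℝ u) x v w = fderiv ℝ (fderiv ℝ u) x w v :=
    hu.contDiffAt.isSymmSndFDerivAt (by simp) v w
  have h_hessian : ∑ j, x j * ∑ i, ⟪pd u i x, fderiv ℝ (fderiv ℝ u) x (EuclideanSpace.single j 1)
        (EuclideanSpace.single i 1)⟫_ℝ =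
      ∑ i, ⟪fderiv ℝ (fderiv ℝ u) x (EuclideanSpace.single i 1) x, pd u i x⟫_ℝ := by
    simp_rw [Finset.mul_sum]
    rw [Finset.sum_comm]
    refine Finset.sum_congr rfl fun i _ => ?_
    simp_rw [h_symm _ (EuclideanSpace.single i 1), real_inner_comm (pd u i x)]
    exact sum_coord_smul_map_single ((innerSL ℝ (pd u i x)).comp
      (fderiv ℝ (fderiv ℝ u) x (EuclideanSpace.single i 1))) x
  simp only [divergence, fderiv_pohozaevCurrent_single hu, Finset.sum_sub_distrib,
    Finset.sum_add_distrib, h_hessian, ← inner_sum, ← lap_eq_sum_fderiv_fderiv hu,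
    Finset.sum_const, Finset.card_univ, Fintype.card_fin, nsmul_eq_mul]
  rw [← gradNormSq]
  ring

lemma divergence_massCurrent (hu : ContDiff ℝ 2 u) (x : Ed d) :
    divergence (massCurrent u) x = d * ‖u x‖ ^ 2 + 2 * ⟪u x, fderiv ℝ u x x⟫_ℝ := by
  have h_inner := sum_coord_smul_map_single ((innerSL ℝ (u x)).comp (fderiv ℝ u x)) x
  rw [divergence_eq_sum_of_hasFDerivAt (F := massCurrent u) fun j =>
    (EuclideanSpace.proj (𝕜 := ℝ) j).hasFDerivAt.mul
      (hu.differentiable two_ne_zero x).hasFDerivAt.norm_sq]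
  simp only [ContinuousLinearMap.comp_apply, innerSL_apply_apply, smul_eq_mul] at h_inner
  simp only [← h_inner, Finset.mul_sum, mul_left_comm (2 : ℝ)]
  simp [Finset.sum_add_distrib, add_comm, -Complex.inner]

lemma divergence_mul_massCurrent (hu : ContDiff ℝ 2 u) {φ : Ed d → ℝ} {x : Ed d}
    (hφ : DifferentiableAt ℝ φ x) :
    divergence (fun j y => φ y * massCurrent u j y) x =
      (fderiv ℝ φ x x + d * φ x) * ‖u x‖ ^ 2 + 2 * φ x * ⟪u x, fderiv ℝ u x x⟫_ℝ := by
  rw [divergence_mul hφ.hasFDerivAt fun j => (contDiff_massCurrent hu j).differentiable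
    one_ne_zero x, divergence_massCurrent hu, ← sum_coord_smul_map_single (fderiv ℝ φ x) x]
  simp only [massCurrent, smul_eq_mul, add_mul, Finset.sum_mul]
  rw [Finset.sum_congr rfl fun j _ => (mul_left_comm _ _ _).trans (mul_assoc _ _ _).symm]
  ring

end DivergenceIdentities

section MorawetzWeight

variable {d : ℕ} {a : ℝ}

/-- The reciprocal `ρ = ψ⁻¹` of the Morawetz weight `ψ x = √(a² + ‖x‖²)`, so that `∇ψ = ρ x`. -/
def invWeight (a : ℝ) (x : Ed d) : ℝ := (√(a ^ 2 + ‖x‖ ^ 2))⁻¹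

/-- The Laplacian `Δψ` of the Morawetz weight. -/
def lapWeight (a : ℝ) (x : Ed d) : ℝ :=
  ((d : ℝ) - 1) * invWeight a x + a ^ 2 * invWeight a x ^ 3

/-- The radial factor `ℓ` in `∇Δψ = ℓ x`, where `ψ` is the Morawetz weight. -/
def gradLapWeight (a : ℝ) (x : Ed d) : ℝ :=
  -(((d : ℝ) - 1) * invWeight a x ^ 3 + 3 * a ^ 2 * invWeight a x ^ 5)

/-- The negative bi-Laplacian `-Δ²ψ` of the Morawetz weight. -/
def negBilapWeight (a : ℝ) (x : Ed d) : ℝ :=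
  ((d : ℝ) - 1) * (d - 3) * invWeight a x ^ 3 + 6 * a ^ 2 * (d - 3) * invWeight a x ^ 5
    + 15 * a ^ 4 * invWeight a x ^ 7

lemma invWeight_nonneg (a : ℝ) (x : Ed d) : 0 ≤ invWeight a x :=
  inv_nonneg.2 (Real.sqrt_nonneg _)

lemma invWeight_le_inv_norm (a : ℝ) {x : Ed d} (hx : x ≠ 0) : invWeight a x ≤ ‖x‖⁻¹ :=
  inv_anti₀ (norm_pos_iff.2 hx) (Real.le_sqrt_of_sq_le (le_add_of_nonneg_left (sq_nonneg a)))

lemma invWeight_mul_norm_le_one (a : ℝ) (x : Ed d) : invWeight a x * ‖x‖ ≤ 1 :=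
  inv_mul_le_one_of_le₀ (Real.le_sqrt_of_sq_le (le_add_of_nonneg_left (sq_nonneg a)))
    (Real.sqrt_nonneg _)

lemma tendsto_invWeight {x : Ed d} {c : ℕ → ℝ} (hc : Tendsto c atTop (𝓝 0)) (hx : x ≠ 0) :
    Tendsto (fun n => invWeight (c n) x) atTop (𝓝 ‖x‖⁻¹) := by
  have h_sqrt : Tendsto (fun n => √(c n ^ 2 + ‖x‖ ^ 2)) atTop (𝓝 ‖x‖) := by
    have h := ((hc.pow 2).add_const (‖x‖ ^ 2)).sqrt
    rwa [zero_pow two_ne_zero, zero_add, Real.sqrt_sq (norm_nonneg x)] at h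
  exact h_sqrt.inv₀ (norm_ne_zero_iff.2 hx)

lemma sq_mul_invWeight_sq_le_one (a : ℝ) (x : Ed d) : a ^ 2 * invWeight a x ^ 2 ≤ 1 := by
  rw [← mul_pow, sq_le_one_iff_abs_le_one, abs_mul, abs_of_nonneg (invWeight_nonneg a x)]
  exact mul_inv_le_one_of_le₀
    (Real.abs_le_sqrt (le_add_of_nonneg_right (sq_nonneg ‖x‖))) (Real.sqrt_nonneg _)

lemma lapWeight_le (a : ℝ) (x : Ed d) : lapWeight a x ≤ d * invWeight a x := by
  have := mul_le_mul_of_nonneg_right (sq_mul_invWeight_sq_le_one a x) (invWeight_nonneg a x)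
  rw [lapWeight]
  linarith

lemma abs_gradLapWeight_le (a : ℝ) (x : Ed d) :
    |gradLapWeight a x| ≤ ((d : ℝ) + 4) * invWeight a x ^ 3 := by
  have h_pow := pow_nonneg (invWeight_nonneg a x) 3
  have h_lt := mul_le_mul_of_nonneg_right (sq_mul_invWeight_sq_le_one a x) h_pow
  have h_five : 0 ≤ a ^ 2 * invWeight a x ^ 5 :=
    mul_nonneg (sq_nonneg a) (pow_nonneg (invWeight_nonneg a x) 5)
  have h_dim : 0 ≤ d * invWeight a x ^ 3 := by positivity
  rw [gradLapWeight, abs_le]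
  constructor <;> linarith

lemma lapWeight_nonneg [NeZero d] (a : ℝ) (x : Ed d) : 0 ≤ lapWeight a x := by
  have h_dim : (1 : ℝ) ≤ d := by exact_mod_cast NeZero.one_le
  have h_inv := invWeight_nonneg a x
  exact add_nonneg (mul_nonneg (by linarith) h_inv) (by positivity)

lemma mul_invWeight_cube_le_negBilapWeight (hd : 3 ≤ d) (a : ℝ) (x : Ed d) :
    ((d : ℝ) - 1) * (d - 3) * invWeight a x ^ 3 ≤ negBilapWeight a x := by
  have h_dim : (0 : ℝ) ≤ d - 3 := by rw [sub_nonneg]; exact_mod_cast hd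
  have h_inv := invWeight_nonneg a x
  have h_five : 0 ≤ 6 * a ^ 2 * (d - 3) * invWeight a x ^ 5 := by positivity
  have h_seven : 0 ≤ 15 * a ^ 4 * invWeight a x ^ 7 := by positivity
  rw [negBilapWeight]
  linarith

lemma invWeight_le_inv (ha : 0 < a) (x : Ed d) : invWeight a x ≤ a⁻¹ :=
  inv_anti₀ ha (Real.le_sqrt_of_sq_le (le_add_of_nonneg_right (sq_nonneg ‖x‖)))

lemma invWeight_sq_mul (ha : 0 < a) (x : Ed d) : invWeight a x ^ 2 * (a ^ 2 + ‖x‖ ^ 2) = 1 := by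
  rw [invWeight, inv_pow, Real.sq_sqrt (by positivity), inv_mul_cancel₀ (by positivity)]

lemma inv_four_mul_le_sq_mul_invWeight_cube (ha : 0 < a) {x : Ed d} (hx : ‖x‖ ≤ a) :
    (4 * a)⁻¹ ≤ a ^ 2 * invWeight a x ^ 3 := by
  have h_lower : (2 * a)⁻¹ ≤ invWeight a x := by
    refine inv_anti₀ (by positivity) (Real.sqrt_le_iff.2 ⟨by positivity, ?_⟩)
    nlinarith [norm_nonneg x]
  have h_sq : 2⁻¹ ≤ a ^ 2 * invWeight a x ^ 2 := by
    have h_norm : ‖x‖ ^ 2 ≤ a ^ 2 := by gcongr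
    nlinarith [invWeight_sq_mul ha x, sq_nonneg (invWeight a x)]
  calc (4 * a)⁻¹ = 2⁻¹ * (2 * a)⁻¹ := by rw [← mul_inv]; ring
    _ ≤ a ^ 2 * invWeight a x ^ 2 * invWeight a x := by gcongr
    _ = a ^ 2 * invWeight a x ^ 3 := by ring

lemma contDiff_invWeight (ha : 0 < a) : ContDiff ℝ 1 (invWeight a : Ed d → ℝ) :=
  ((contDiff_const.add (contDiff_norm_sq ℝ)).sqrt fun x => by positivity).inv fun x => by positivity

lemma contDiff_lapWeight (ha : 0 < a) : ContDiff ℝ 1 (lapWeight a : Ed d → ℝ) :=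
  (contDiff_const.mul (contDiff_invWeight ha)).add
    (contDiff_const.mul ((contDiff_invWeight ha).pow 3))

lemma contDiff_gradLapWeight (ha : 0 < a) : ContDiff ℝ 1 (gradLapWeight a : Ed d → ℝ) :=
  ((contDiff_const.mul ((contDiff_invWeight ha).pow 3)).add
    (contDiff_const.mul ((contDiff_invWeight ha).pow 5))).neg

lemma hasFDerivAt_invWeight (ha : 0 < a) (x : Ed d) :
    HasFDerivAt (invWeight a) (-(invWeight a x ^ 3) • innerSL ℝ x) x := by
  have h_pos : 0 < a ^ 2 + ‖x‖ ^ 2 := by positivity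
  have h_sqrt := ((hasFDerivAt_id x).norm_sq.const_add (a ^ 2)).sqrt h_pos.ne'
  refine ((hasDerivAt_inv (Real.sqrt_pos.2 h_pos).ne').comp_hasFDerivAt x h_sqrt).congr_fderiv ?_
  ext v
  simp [invWeight]
  field_simp

lemma hasFDerivAt_lapWeight (ha : 0 < a) (x : Ed d) :
    HasFDerivAt (lapWeight a) (gradLapWeight a x • innerSL ℝ x) x := by
  have h_inv := hasFDerivAt_invWeight ha x
  refine ((h_inv.const_mul ((d : ℝ) - 1)).add ((h_inv.pow 3).const_mul (a ^ 2))).congr_fderiv ?_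
  ext v
  simp [gradLapWeight]
  ring

lemma fderiv_gradLapWeight_apply_self (ha : 0 < a) (x : Ed d) :
    fderiv ℝ (gradLapWeight a) x x = -(negBilapWeight a x + d * gradLapWeight a x) := by
  have h_inv := hasFDerivAt_invWeight ha x
  have h_deriv := ((((h_inv.pow 3).const_mul ((d : ℝ) - 1)).add
    ((h_inv.pow 5).const_mul (3 * a ^ 2)))).neg
  rw [HasFDerivAt.fderiv (f := gradLapWeight a) h_deriv]
  simp [gradLapWeight, negBilapWeight]
  linear_combination (3 * ((d : ℝ) - 1) * invWeight a x ^ 3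
    + 15 * a ^ 2 * invWeight a x ^ 5) * invWeight_sq_mul ha x

end MorawetzWeight

section Morawetz

variable {d : ℕ} {u : Ed d → ℂ} {a : ℝ}

/-- The current of the Morawetz multiplier `∇ψ·∇u + ½ Δψ u` for the equation `Δu = W u + g`, where
`ψ x = √(a² + ‖x‖²)`. -/
def morawetzCurrent (a : ℝ) (W : Ed d → ℝ) (u : Ed d → ℂ) (j : Fin d) (x : Ed d) : ℝ :=
  invWeight a x * pohozaevCurrent u j x + 1 / 2 * lapWeight a x * energyCurrent 1 u j x
    - (1 / 4 * gradLapWeight a x + 1 / 2 * (W x * invWeight a x)) * massCurrent u j x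

lemma fderiv_massFactor_apply_self {W : Ed d → ℝ} (ha : 0 < a) {x : Ed d}
    (hW : DifferentiableAt ℝ W x) :
    fderiv ℝ (fun y => 1 / 4 * gradLapWeight a y + 1 / 2 * (W y * invWeight a y)) x x =
      1 / 2 * invWeight a x * fderiv ℝ W x x + 1 / 2 * W x * lapWeight a x
        - 1 / 4 * negBilapWeight a x
        - d * (1 / 4 * gradLapWeight a x + 1 / 2 * (W x * invWeight a x)) := by
  have h_grad := ((contDiff_gradLapWeight ha).differentiable one_ne_zero x).hasFDerivAt
  have h_deriv := (h_grad.const_mul (1 / 4)).fun_add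
    ((hW.hasFDerivAt.fun_mul (hasFDerivAt_invWeight ha x)).const_mul (1 / 2))
  rw [h_deriv.fderiv]
  simp [fderiv_gradLapWeight_apply_self ha, lapWeight]
  linear_combination (-1 / 2 * W x * invWeight a x) * invWeight_sq_mul ha x

lemma divergence_morawetzCurrent {W : Ed d → ℝ} (ha : 0 < a) (hu : ContDiff ℝ 2 u) {x : Ed d}
    (hW : DifferentiableAt ℝ W x) :
    divergence (morawetzCurrent a W u) x =
      invWeight a x * gradNormSq u x - invWeight a x ^ 3 * ‖fderiv ℝ u x x‖ ^ 2
        + ⟪invWeight a x • fderiv ℝ u x x + (1 / 2 * lapWeight a x) • u x, lap u x - W x • u x⟫_ℝ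
        + 1 / 4 * negBilapWeight a x * ‖u x‖ ^ 2
        - 1 / 2 * invWeight a x * fderiv ℝ W x x * ‖u x‖ ^ 2 := by
  have h_poho (j) := (contDiff_pohozaevCurrent hu j).differentiable one_ne_zero x
  have h_energy (j) := (contDiff_energyCurrent hu 1 j).differentiable one_ne_zero x
  have h_mass (j) := (contDiff_massCurrent hu j).differentiable one_ne_zero x
  have h_inv := hasFDerivAt_invWeight ha x
  have h_lap := (hasFDerivAt_lapWeight ha x).const_mul (1 / 2)
  rw [smul_smul] at h_lap
  have h_factor : DifferentiableAt ℝ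
      (fun y => 1 / 4 * gradLapWeight a y + 1 / 2 * (W y * invWeight a y)) x :=
    (((contDiff_gradLapWeight ha).differentiable one_ne_zero x).const_mul _).fun_add
      ((hW.fun_mul h_inv.differentiableAt).const_mul _)
  have h_sum : divergence (morawetzCurrent a W u) x = _ :=
    (divergence_sub
      (fun j => (h_inv.differentiableAt.fun_mul (h_poho j)).fun_add
        (h_lap.differentiableAt.fun_mul (h_energy j)))
      (fun j => h_factor.fun_mul (h_mass j))).trans <|
    congrArg (· - _) (divergence_add (fun j => h_inv.differentiableAt.fun_mul (h_poho j))
      (fun j => h_lap.differentiableAt.fun_mul (h_energy j)))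
  rw [h_sum, divergence_radial_mul h_inv h_poho, divergence_radial_mul h_lap h_energy,
    divergence_mul_massCurrent hu h_factor, fderiv_massFactor_apply_self ha hW,
    sum_coord_mul_pohozaevCurrent, sum_coord_mul_energyCurrent, divergence_pohozaevCurrent hu,
    divergence_energyCurrent hu]
  simp only [inner_add_left, inner_sub_right, real_inner_smul_left, real_inner_smul_right,
    real_inner_self_eq_norm_sq, real_inner_comm (u x) (fderiv ℝ u x x), one_mul, Complex.one_re,
    lapWeight]
  linear_combination (1 / 2 * invWeight a x * gradNormSq u x) * invWeight_sq_mul ha x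

end Morawetz

section Resolvent

variable {d : ℕ} {V : Ed d → ℝ} {u f : Ed d → ℂ} {a γ η τ e : ℝ}

/-- A nonnegative potential, regular away from the origin, whose radial derivative is controlled
from above with a margin `η` below the Hardy-type constant and a gain `γ` of the potential. -/
structure IsRepulsive (γ η : ℝ) (V : Ed d → ℝ) : Prop where
  nonneg : ∀ x, 0 ≤ V x
  contDiffOn : ContDiffOn ℝ 1 V {0}ᶜ
  radialDeriv_le : ∀ x ≠ 0, γ * V x + ‖x‖ * radialDeriv V x ≤
    (1 - η) * ((d : ℝ) - 1) * ((d : ℝ) - 3) / (2 * ‖x‖ ^ 2)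

/-- A classical solution of `-Δu + V u + i e u - τ u = f` with `u`, `∇u` and `f` in `L²`; the real
number `e` is the signed absorption `±ε`. -/
structure IsFiniteEnergySolution (V : Ed d → ℝ) (τ e : ℝ) (u f : Ed d → ℂ) : Prop where
  contDiff : ContDiff ℝ 2 u
  lap_eq : ∀ x, lap u x = (V x - τ) • u x + (e • (Complex.I * u x) - f x)
  memLp : MemLp u 2
  memLp_grad : MemLp (fun x => √(gradNormSq u x)) 2
  memLp_source : MemLp f 2

/-- The constant `(d - 1)(d - 3) / 4` in front of `∫ |u|² / |x|³` in the Morawetz estimate. -/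
def hardyConst (d : ℕ) : ℝ := ((d : ℝ) - 1) * (d - 3) / 4

lemma hardyConst_pos (hd : 3 < d) : 0 < hardyConst d := by
  have h_dim : (3 : ℝ) < d := by exact_mod_cast hd
  have : (0 : ℝ) < d - 1 := by linarith
  have : (0 : ℝ) < d - 3 := by linarith
  unfold hardyConst
  positivity

lemma IsRepulsive.mono {η' : ℝ} (hV : IsRepulsive γ η V) (hd : 3 ≤ d) (hη : η' ≤ η) :
    IsRepulsive γ η' V where
  nonneg := hV.nonneg
  contDiffOn := hV.contDiffOn
  radialDeriv_le x hx := (hV.radialDeriv_le x hx).trans <| by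
    have h_dim : (3 : ℝ) ≤ d := by exact_mod_cast hd
    have : (0 : ℝ) ≤ d - 1 := by linarith
    have : (0 : ℝ) ≤ d - 3 := by linarith
    gcongr

lemma IsRepulsive.differentiableAt (hV : IsRepulsive γ η V) {x : Ed d} (hx : x ≠ 0) :
    DifferentiableAt ℝ V x :=
  (hV.contDiffOn.differentiableOn one_ne_zero).differentiableAt (isOpen_compl_singleton.mem_nhds hx)

lemma IsRepulsive.mul_add_fderiv_le (hV : IsRepulsive γ η V) {x : Ed d} (hx : x ≠ 0) :
    γ * V x + fderiv ℝ V x x ≤ 2 * (1 - η) * hardyConst d * (‖x‖ ^ 2)⁻¹ := by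
  have h_norm := norm_ne_zero_iff.2 hx
  calc γ * V x + fderiv ℝ V x x = γ * V x + ‖x‖ * radialDeriv V x := by
        rw [radialDeriv, mul_div_cancel₀ _ h_norm]
    _ ≤ (1 - η) * ((d : ℝ) - 1) * ((d : ℝ) - 3) / (2 * ‖x‖ ^ 2) := hV.radialDeriv_le x hx
    _ = 2 * (1 - η) * hardyConst d * (‖x‖ ^ 2)⁻¹ := by rw [hardyConst]; field_simp; ring

lemma IsRepulsive.le_neg_half_invWeight_mul_fderiv (hV : IsRepulsive γ η V) (hd : 3 < d)
    (hη : η ≤ 1) (a : ℝ) {x : Ed d} (hx : x ≠ 0) :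
    γ / 2 * (invWeight a x * V x) - (1 - η) * hardyConst d * (‖x‖ ^ 3)⁻¹ ≤
      -(1 / 2 * invWeight a x * fderiv ℝ V x x) := by
  have h_const : 0 ≤ (1 - η) * hardyConst d := mul_nonneg (sub_nonneg.2 hη) (hardyConst_pos hd).le
  have h_weight : (1 - η) * hardyConst d * ((‖x‖ ^ 2)⁻¹ * invWeight a x) ≤
      (1 - η) * hardyConst d * (‖x‖ ^ 3)⁻¹ := by
    rw [pow_succ ‖x‖ 2, mul_inv]
    gcongr
    exact invWeight_le_inv_norm a hx
  have := mul_le_mul_of_nonneg_left (hV.mul_add_fderiv_le hx) (invWeight_nonneg a x)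
  linarith

/-- The right-hand side is the Hessian of `ψ` applied to `∇u`; its smallest eigenvalue is the radial
one, `a² ρ³`. -/
lemma sq_mul_invWeight_cube_mul_gradNormSq_le (ha : 0 < a) (u : Ed d → ℂ) (x : Ed d) :
    a ^ 2 * invWeight a x ^ 3 * gradNormSq u x ≤
      invWeight a x * gradNormSq u x - invWeight a x ^ 3 * ‖fderiv ℝ u x x‖ ^ 2 := by
  have h_radial : ‖fderiv ℝ u x x‖ ^ 2 ≤ ‖x‖ ^ 2 * gradNormSq u x := by
    rw [← Real.sq_sqrt (gradNormSq_nonneg u x), ← mul_pow]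
    gcongr
    exact norm_fderiv_apply_self_le u x
  have h_scaled := mul_le_mul_of_nonneg_left h_radial (pow_nonneg (invWeight_nonneg a x) 3)
  linear_combination h_scaled + invWeight a x * gradNormSq u x * invWeight_sq_mul ha x

/-- The contribution of the source and of the absorption to the Morawetz estimate. -/
def sourceDensity (e : ℝ) (u f : Ed d → ℂ) (x : Ed d) : ℝ :=
  ‖f x‖ * √(gradNormSq u x) + (d : ℝ) / 2 * (‖f x‖ * (‖x‖⁻¹ * ‖u x‖))
    + |e| * (‖u x‖ * √(gradNormSq u x))

lemma IsFiniteEnergySolution.neg_inner_multiplier_le [NeZero d]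
    (hu : IsFiniteEnergySolution V τ e u f) (a : ℝ) {x : Ed d} (hx : x ≠ 0) :
    -⟪invWeight a x • fderiv ℝ u x x + (1 / 2 * lapWeight a x) • u x,
        lap u x - (V x - τ) • u x⟫_ℝ ≤ sourceDensity e u f x := by
  have h_inner_I : ⟪u x, Complex.I * u x⟫_ℝ = 0 := by simp [Complex.inner]; ring
  have h_radial : invWeight a x * ‖fderiv ℝ u x x‖ ≤ √(gradNormSq u x) := calc
    _ ≤ invWeight a x * (‖x‖ * √(gradNormSq u x)) :=
      mul_le_mul_of_nonneg_left (norm_fderiv_apply_self_le u x) (invWeight_nonneg a x)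
    _ ≤ √(gradNormSq u x) := by
      rw [← mul_assoc]
      exact mul_le_of_le_one_left (Real.sqrt_nonneg _) (invWeight_mul_norm_le_one a x)
  have h_lap : lapWeight a x ≤ d * ‖x‖⁻¹ :=
    (lapWeight_le a x).trans (by gcongr; exact invWeight_le_inv_norm a hx)
  have h_first : -⟪invWeight a x • fderiv ℝ u x x, e • (Complex.I * u x) - f x⟫_ℝ ≤
      √(gradNormSq u x) * (|e| * ‖u x‖ + ‖f x‖) := by
    refine (neg_le_abs _).trans ((abs_real_inner_le_norm _ _).trans ?_)
    gcongr
    · rwa [norm_smul, Real.norm_of_nonneg (invWeight_nonneg a x)]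
    · simpa [norm_smul] using norm_sub_le (e • (Complex.I * u x)) (f x)
  have h_second : ⟪u x, f x⟫_ℝ * (1 / 2 * lapWeight a x) ≤
      ‖u x‖ * ‖f x‖ * (1 / 2 * (d * ‖x‖⁻¹)) := by
    have := lapWeight_nonneg a x
    gcongr
    exact real_inner_le_norm _ _
  rw [sourceDensity, hu.lap_eq, add_sub_cancel_left, inner_add_left,
    real_inner_smul_left (u x), inner_sub_right (u x), real_inner_smul_right, h_inner_I]
  linarith

/-- The density of the Morawetz estimate at scale `a`. -/
def morawetzDensity (γ a : ℝ) (V : Ed d → ℝ) (u : Ed d → ℂ) (x : Ed d) : ℝ :=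
  a ^ 2 * invWeight a x ^ 3 * gradNormSq u x + γ / 2 * (invWeight a x * V x) * ‖u x‖ ^ 2
    + hardyConst d * invWeight a x ^ 3 * ‖u x‖ ^ 2

lemma IsRepulsive.morawetzDensity_nonneg (hV : IsRepulsive γ η V) (hd : 3 < d) (hγ : 0 < γ) (a : ℝ)
    (u : Ed d → ℂ) (x : Ed d) : 0 ≤ morawetzDensity γ a V u x := by
  have h_inv := invWeight_nonneg a x
  have h_grad := gradNormSq_nonneg u x
  have h_V := hV.nonneg x
  have h_const := (hardyConst_pos hd).le
  unfold morawetzDensity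
  positivity

lemma tendsto_morawetzDensity {c : ℕ → ℝ} (hc : Tendsto c atTop (𝓝 0)) {x : Ed d} (hx : x ≠ 0) :
    Tendsto (fun n => morawetzDensity γ (c n) V u x) atTop
      (𝓝 (γ / 2 * (‖x‖⁻¹ * V x * ‖u x‖ ^ 2) + hardyConst d * ((‖x‖ ^ 3)⁻¹ * ‖u x‖ ^ 2))) := by
  have h_inv := tendsto_invWeight hc hx
  have h_lim := ((((hc.pow 2).mul (h_inv.pow 3)).mul_const (gradNormSq u x)).add
    (((h_inv.mul_const (V x)).const_mul (γ / 2)).mul_const (‖u x‖ ^ 2))).add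
    (((h_inv.pow 3).const_mul (hardyConst d)).mul_const (‖u x‖ ^ 2))
  simp only [morawetzDensity]
  convert h_lim using 2
  rw [inv_pow]
  ring

lemma IsFiniteEnergySolution.morawetzDensity_sub_le_divergence [NeZero d]
    (hu : IsFiniteEnergySolution V τ e u f) (hV : IsRepulsive γ η V) (hd : 3 < d) (hη : η ≤ 1)
    (ha : 0 < a) {x : Ed d} (hx : x ≠ 0) :
    morawetzDensity γ a V u x
        - ((1 - η) * hardyConst d * ((‖x‖ ^ 3)⁻¹ * ‖u x‖ ^ 2) + sourceDensity e u f x) ≤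
      divergence (morawetzCurrent a (fun y => V y - τ) u) x := by
  rw [divergence_morawetzCurrent ha hu.contDiff ((hV.differentiableAt hx).sub_const τ),
    fderiv_sub_const, morawetzDensity]
  have h_grad := sq_mul_invWeight_cube_mul_gradNormSq_le ha u x
  have h_source := hu.neg_inner_multiplier_le a hx
  have h_bilap : hardyConst d * invWeight a x ^ 3 * ‖u x‖ ^ 2 ≤
      1 / 4 * negBilapWeight a x * ‖u x‖ ^ 2 := by
    have := mul_invWeight_cube_le_negBilapWeight hd.le a x
    refine mul_le_mul_of_nonneg_right ?_ (sq_nonneg _)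
    rw [hardyConst]
    linarith
  have h_potential := mul_le_mul_of_nonneg_right
    (hV.le_neg_half_invWeight_mul_fderiv hd hη a hx) (sq_nonneg ‖u x‖)
  linarith

end Resolvent

section Integrability

lemma integrable_inv_norm_pow_mul {E : Type*} [NormedAddCommGroup E] [NormedSpace ℝ E]
    [FiniteDimensional ℝ E] [MeasurableSpace E] [BorelSpace E] {μ : Measure E} [μ.IsAddHaarMeasure]
    {k : ℕ} (hk : k < finrank ℝ E) {g : E → ℝ} (hg_cont : Continuous g) (hg : Integrable g μ) :
    Integrable (fun x => (‖x‖ ^ k)⁻¹ * g x) μ := by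
  have h_meas : AEStronglyMeasurable (fun x => (‖x‖ ^ k)⁻¹ * g x) μ :=
    (by fun_prop : Measurable fun x : E => (‖x‖ ^ k)⁻¹).aestronglyMeasurable.mul hg.1
  obtain ⟨M, hM⟩ := (isCompact_closedBall (0 : E) 1).exists_bound_of_continuousOn
    hg_cont.continuousOn
  have h_ball : IntegrableOn (fun x => (‖x‖ ^ k)⁻¹ * g x) (ball 0 1) μ := by
    refine integrableOn_ball_of_norm_le_rpow (Nat.one_le_of_lt hk) (C := M)
      (by exact_mod_cast hk : (k : ℝ) < finrank ℝ E) ?_ h_meas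
    filter_upwards [ae_restrict_mem measurableSet_ball] with x hx
    rw [norm_mul, norm_inv, norm_pow, norm_norm, Real.rpow_neg (norm_nonneg x), Real.rpow_natCast,
      mul_comm]
    gcongr
    exact hM x (ball_subset_closedBall hx)
  have h_compl : IntegrableOn (fun x => (‖x‖ ^ k)⁻¹ * g x) (ball 0 1)ᶜ μ := by
    refine hg.norm.integrableOn.mono' h_meas.restrict ?_
    filter_upwards [ae_restrict_mem measurableSet_ball.compl] with x hx
    have h_norm : 1 ≤ ‖x‖ := by simpa using hx
    rw [norm_mul, norm_inv, norm_pow, norm_norm]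
    exact mul_le_of_le_one_left (norm_nonneg _) (inv_le_one_of_one_le₀ (one_le_pow₀ h_norm))
  have h_union := h_ball.union h_compl
  rwa [union_compl_self, integrableOn_univ] at h_union

lemma integral_mul_le_sqrt_mul_sqrt {α : Type*} [MeasurableSpace α] {μ : Measure α} {g h : α → ℝ}
    (hg_nonneg : 0 ≤ g) (hh_nonneg : 0 ≤ h) (hg : MemLp g 2 μ) (hh : MemLp h 2 μ) :
    ∫ x, g x * h x ∂μ ≤ √(∫ x, g x ^ 2 ∂μ) * √(∫ x, h x ^ 2 ∂μ) := by
  have h_holder := integral_mul_le_Lp_mul_Lq_of_nonneg Real.HolderConjugate.two_two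
    (ae_of_all _ hg_nonneg) (ae_of_all _ hh_nonneg) (by simpa using hg) (by simpa using hh)
  simpa [Real.sqrt_eq_rpow] using h_holder

variable {d : ℕ} [NeZero d]

lemma HasNegligibleFlux.of_le {F : Fin d → Ed d → ℝ} {H : Ed d → ℝ}
    (hF : ∀ j, ContDiffOn ℝ 1 (F j) {0}ᶜ) (hH : Integrable H)
    (h_le : ∀ j, ∀ x ≠ 0, ‖x‖⁻¹ * |F j x| ≤ H x) : HasNegligibleFlux F where
  contDiffOn := hF
  integrable j := by
    refine hH.mono' ((by fun_prop : Measurable fun x : Ed d => ‖x‖⁻¹).aestronglyMeasurable.mul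
      (aestronglyMeasurable_of_continuousOn_compl_singleton (hF j).continuousOn)) ?_
    filter_upwards [Measure.ae_ne volume (0 : Ed d)] with x hx
    rw [norm_mul, norm_inv, norm_norm]
    exact h_le j x hx

end Integrability

namespace IsFiniteEnergySolution

variable {d : ℕ} {V : Ed d → ℝ} {u f : Ed d → ℂ} {a γ η τ e : ℝ}

lemma continuous (hu : IsFiniteEnergySolution V τ e u f) : Continuous u := hu.contDiff.continuous

lemma integrable_norm_sq (hu : IsFiniteEnergySolution V τ e u f) :
    Integrable fun x => ‖u x‖ ^ 2 :=
  hu.memLp.integrable_norm_pow two_ne_zero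

lemma integrable_gradNormSq (hu : IsFiniteEnergySolution V τ e u f) :
    Integrable (gradNormSq u) := by
  simpa [Real.sq_sqrt (gradNormSq_nonneg u _)] using hu.memLp_grad.integrable_sq

lemma integrable_inv_norm_cube_mul (hu : IsFiniteEnergySolution V τ e u f) (hd : 3 < d) :
    Integrable fun x => (‖x‖ ^ 3)⁻¹ * ‖u x‖ ^ 2 :=
  integrable_inv_norm_pow_mul (by simpa using hd) (hu.continuous.norm.pow 2) hu.integrable_norm_sq

lemma memLp_inv_norm_mul (hu : IsFiniteEnergySolution V τ e u f) (hd : 2 < d) :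
    MemLp (fun x => ‖x‖⁻¹ * ‖u x‖) 2 := by
  have h_meas : AEStronglyMeasurable fun x => ‖x‖⁻¹ * ‖u x‖ :=
    (by fun_prop : Measurable fun x : Ed d => ‖x‖⁻¹).aestronglyMeasurable.mul
      hu.continuous.norm.aestronglyMeasurable
  rw [memLp_two_iff_integrable_sq h_meas]
  simp only [mul_pow, inv_pow]
  exact integrable_inv_norm_pow_mul (by simpa using hd) (hu.continuous.norm.pow 2)
    hu.integrable_norm_sq

lemma integrable_source_mul (hu : IsFiniteEnergySolution V τ e u f) :
    Integrable fun x => ‖f x‖ * ‖u x‖ :=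
  hu.memLp_source.norm.integrable_mul hu.memLp.norm

lemma integrable_inv_norm_mul_sqrt_gradNormSq (hu : IsFiniteEnergySolution V τ e u f) (hd : 2 < d) :
    Integrable fun x => ‖x‖⁻¹ * ‖u x‖ * √(gradNormSq u x) :=
  (hu.memLp_inv_norm_mul hd).integrable_mul hu.memLp_grad

lemma integrable_sourceDensity (hu : IsFiniteEnergySolution V τ e u f) (hd : 2 < d) :
    Integrable (sourceDensity e u f) :=
  ((hu.memLp_source.norm.integrable_mul hu.memLp_grad).add
    ((hu.memLp_source.norm.integrable_mul (hu.memLp_inv_norm_mul hd)).const_mul _)).add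
    ((hu.memLp.norm.integrable_mul hu.memLp_grad).const_mul _)

lemma divergence_energyCurrent_eq (hu : IsFiniteEnergySolution V τ e u f) (z : ℂ) (x : Ed d) :
    divergence (energyCurrent z u) x = z.re * (gradNormSq u x + (V x - τ) * ‖u x‖ ^ 2)
      + z.im * (e * ‖u x‖ ^ 2) - ⟪z * u x, f x⟫_ℝ := by
  have h_im : ⟪z * u x, Complex.I * u x⟫_ℝ = z.im * ‖u x‖ ^ 2 := by
    rw [Complex.inner, Complex.sq_norm, Complex.normSq_apply]; simp; ring
  rw [divergence_energyCurrent hu.contDiff, hu.lap_eq, inner_add_right, inner_sub_right,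
    real_inner_smul_right, real_inner_smul_right, real_inner_mul_self_left, h_im]
  ring

variable [NeZero d]

lemma hasNegligibleFlux_energyCurrent (hu : IsFiniteEnergySolution V τ e u f) (hd : 2 < d) (z : ℂ) :
    HasNegligibleFlux (energyCurrent z u) := by
  refine .of_le (fun j => (contDiff_energyCurrent hu.contDiff z j).contDiffOn)
    ((hu.integrable_inv_norm_mul_sqrt_gradNormSq hd).const_mul ‖z‖) fun j x _ => ?_
  calc ‖x‖⁻¹ * |energyCurrent z u j x| ≤ ‖x‖⁻¹ * (‖z * u x‖ * √(gradNormSq u x)) := by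
        gcongr
        exact (abs_real_inner_le_norm _ _).trans
          (by gcongr; exact norm_pd_le_sqrt_gradNormSq u j x)
    _ = ‖z‖ * (‖x‖⁻¹ * ‖u x‖ * √(gradNormSq u x)) := by rw [norm_mul]; ring

/-- The energy identity for the multiplier `± i u`, whose sign makes `± e` nonnegative. -/
lemma abs_mul_integral_norm_sq_le (hu : IsFiniteEnergySolution V τ e u f) (hd : 2 < d) :
    |e| * ∫ x, ‖u x‖ ^ 2 ≤ ∫ x, ‖f x‖ * ‖u x‖ := by
  obtain ⟨s, hs, hse⟩ : ∃ s : ℝ, |s| = 1 ∧ s * e = |e| := by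
    rcases abs_choice e with h | h
    · exact ⟨1, by simp, by simp [h]⟩
    · exact ⟨-1, by simp, by simp [h]⟩
  rw [← integral_const_mul]
  refine ((hu.hasNegligibleFlux_energyCurrent hd (s * Complex.I)).integral_le_integral
    (A := fun x => |e| * ‖u x‖ ^ 2)
    (continuous_const.mul (hu.continuous.norm.pow 2)).continuousOn (fun x _ => by positivity)
    hu.integrable_source_mul fun x _ => ?_).2
  have h_source := real_inner_le_norm (s * Complex.I * u x) (f x)
  rw [norm_mul, norm_mul, Complex.norm_real, Real.norm_eq_abs, hs, Complex.norm_I, one_mul,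
    one_mul] at h_source
  rw [hu.divergence_energyCurrent_eq]
  simp only [Complex.re_ofReal_mul, Complex.im_ofReal_mul, Complex.I_re, Complex.I_im, mul_zero,
    mul_one, zero_mul, zero_add, ← mul_assoc, hse]
  linarith

lemma integrable_energy_and_integral_le (hu : IsFiniteEnergySolution V τ e u f) (hd : 2 < d)
    (hV : ContinuousOn V {0}ᶜ) (hV_nonneg : 0 ≤ V) :
    Integrable (fun x => gradNormSq u x + V x * ‖u x‖ ^ 2) ∧
      ∫ x, gradNormSq u x + V x * ‖u x‖ ^ 2 ≤
        ∫ x, max 0 τ * ‖u x‖ ^ 2 + ‖f x‖ * ‖u x‖ := by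
  refine (hu.hasNegligibleFlux_energyCurrent hd 1).integral_le_integral
    ((contDiff_gradNormSq hu.contDiff).continuous.continuousOn.add
      (hV.mul (hu.continuous.norm.pow 2).continuousOn))
    (fun x _ => add_nonneg (gradNormSq_nonneg u x) (mul_nonneg (hV_nonneg x) (sq_nonneg _)))
    ((hu.integrable_norm_sq.const_mul _).add hu.integrable_source_mul) fun x _ => ?_
  have h_tau := mul_le_mul_of_nonneg_right (le_max_right 0 τ) (sq_nonneg ‖u x‖)
  have h_source := real_inner_le_norm (u x) (f x)
  rw [hu.divergence_energyCurrent_eq, Complex.one_re, Complex.one_im, one_mul,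
    one_mul]
  linarith

lemma integrable_potential_mul_norm_sq (hu : IsFiniteEnergySolution V τ e u f) (hd : 2 < d)
    (hV : ContinuousOn V {0}ᶜ) (hV_nonneg : 0 ≤ V) :
    Integrable fun x => V x * ‖u x‖ ^ 2 := by
  have h_sub :=
    (hu.integrable_energy_and_integral_le hd hV hV_nonneg).1.sub hu.integrable_gradNormSq
  exact h_sub.congr (ae_of_all _ fun x => add_sub_cancel_left _ _)

lemma integral_gradNormSq_le (hu : IsFiniteEnergySolution V τ e u f) (hd : 2 < d)
    (hV : ContinuousOn V {0}ᶜ) (hV_nonneg : 0 ≤ V) :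
    ∫ x, gradNormSq u x ≤ max 0 τ * (∫ x, ‖u x‖ ^ 2) + ∫ x, ‖f x‖ * ‖u x‖ := by
  obtain ⟨h_int, h_le⟩ := hu.integrable_energy_and_integral_le hd hV hV_nonneg
  rw [integral_add (hu.integrable_norm_sq.const_mul _) hu.integrable_source_mul,
    integral_const_mul] at h_le
  refine (integral_mono hu.integrable_gradNormSq h_int fun x => ?_).trans h_le
  exact le_add_of_nonneg_right (mul_nonneg (hV_nonneg x) (sq_nonneg _))

lemma abs_mul_integral_norm_mul_sqrt_gradNormSq_le (hu : IsFiniteEnergySolution V τ e u f)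
    (hd : 2 < d) (hV : ContinuousOn V {0}ᶜ) (hV_nonneg : 0 ≤ V) :
    |e| * ∫ x, ‖u x‖ * √(gradNormSq u x) ≤ √(|e| + max 0 τ) * ∫ x, ‖f x‖ * ‖u x‖ := by
  have h_mass := hu.abs_mul_integral_norm_sq_le hd
  have h_grad := hu.integral_gradNormSq_le hd hV hV_nonneg
  have h_cs := integral_mul_le_sqrt_mul_sqrt (fun x => norm_nonneg (u x))
    (fun x => Real.sqrt_nonneg (gradNormSq u x)) hu.memLp.norm hu.memLp_grad
  simp only [Real.sq_sqrt (gradNormSq_nonneg u _)] at h_cs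
  set m := ∫ x, ‖u x‖ ^ 2
  set p := ∫ x, ‖f x‖ * ‖u x‖
  set g := ∫ x, gradNormSq u x
  have hp : 0 ≤ p := integral_nonneg fun x => by positivity
  have hg : 0 ≤ g := integral_nonneg (gradNormSq_nonneg u)
  have : 0 ≤ max 0 τ := le_max_left _ _
  have h_sq : |e| ^ 2 * (m * g) ≤ (|e| + max 0 τ) * p ^ 2 := calc
    |e| ^ 2 * (m * g) = |e| * m * (|e| * g) := by ring
    _ ≤ p * (|e| * (max 0 τ * m + p)) := by gcongr
    _ = p * (max 0 τ * (|e| * m) + |e| * p) := by ring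
    _ ≤ p * (max 0 τ * p + |e| * p) := by gcongr
    _ = (|e| + max 0 τ) * p ^ 2 := by ring
  calc |e| * ∫ x, ‖u x‖ * √(gradNormSq u x) ≤ |e| * (√m * √g) := by gcongr
    _ = √(|e| ^ 2 * (m * g)) := by
      rw [Real.sqrt_mul (sq_nonneg _), Real.sqrt_sq (abs_nonneg _),
        Real.sqrt_mul (integral_nonneg fun x => by positivity)]
    _ ≤ √((|e| + max 0 τ) * p ^ 2) := Real.sqrt_le_sqrt h_sq
    _ = √(|e| + max 0 τ) * p := by rw [Real.sqrt_mul (by positivity), Real.sqrt_sq hp]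

lemma hasNegligibleFlux_invWeight_mul_pohozaevCurrent (hu : IsFiniteEnergySolution V τ e u f)
    (ha : 0 < a) :
    HasNegligibleFlux fun j x => invWeight a x * pohozaevCurrent u j x := by
  refine .of_le (fun j => ((contDiff_invWeight ha).mul
    (contDiff_pohozaevCurrent hu.contDiff j)).contDiffOn)
    (hu.integrable_gradNormSq.const_mul (3 / 2 * a⁻¹)) fun j x hx => ?_
  have := norm_pos_iff.2 hx
  have h_inner : |⟪fderiv ℝ u x x, pd u j x⟫_ℝ| ≤ ‖x‖ * gradNormSq u x := calc
    _ ≤ ‖x‖ * √(gradNormSq u x) * √(gradNormSq u x) := (abs_real_inner_le_norm _ _).trans <|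
      mul_le_mul (norm_fderiv_apply_self_le u x) (norm_pd_le_sqrt_gradNormSq u j x) (norm_nonneg _)
        (by positivity)
    _ = ‖x‖ * gradNormSq u x := by rw [mul_assoc, Real.mul_self_sqrt (gradNormSq_nonneg u x)]
  have h_coord : |1 / 2 * (x j * gradNormSq u x)| ≤ 1 / 2 * (‖x‖ * gradNormSq u x) := by
    have := gradNormSq_nonneg u x
    rw [abs_mul, abs_mul, abs_of_nonneg this, abs_of_pos one_half_pos]
    gcongr
    exact PiLp.norm_apply_le x j
  have h_current : |pohozaevCurrent u j x| ≤ 3 / 2 * ‖x‖ * gradNormSq u x :=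
    (abs_sub _ _).trans (by linarith)
  calc ‖x‖⁻¹ * |invWeight a x * pohozaevCurrent u j x|
      ≤ ‖x‖⁻¹ * (a⁻¹ * (3 / 2 * ‖x‖ * gradNormSq u x)) := by
        rw [abs_mul, abs_of_nonneg (invWeight_nonneg a x)]
        gcongr
        exact invWeight_le_inv ha x
    _ = 3 / 2 * a⁻¹ * gradNormSq u x := by field_simp

lemma hasNegligibleFlux_lapWeight_mul_energyCurrent (hu : IsFiniteEnergySolution V τ e u f)
    (hd : 2 < d) (ha : 0 < a) :
    HasNegligibleFlux fun j x => 1 / 2 * lapWeight a x * energyCurrent 1 u j x := by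
  refine .of_le (fun j => ((contDiff_const.mul (contDiff_lapWeight ha)).mul
    (contDiff_energyCurrent hu.contDiff 1 j)).contDiffOn)
    ((hu.integrable_inv_norm_mul_sqrt_gradNormSq hd).const_mul (1 / 2 * (d * a⁻¹))) fun j x _ => ?_
  have h_energy : |energyCurrent 1 u j x| ≤ ‖u x‖ * √(gradNormSq u x) := by
    rw [energyCurrent, one_mul]
    exact (abs_real_inner_le_norm _ _).trans (by gcongr; exact norm_pd_le_sqrt_gradNormSq u j x)
  have h_lap : |1 / 2 * lapWeight a x| ≤ 1 / 2 * (d * a⁻¹) := by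
    rw [abs_of_nonneg (mul_nonneg one_half_pos.le (lapWeight_nonneg a x))]
    exact mul_le_mul_of_nonneg_left
      ((lapWeight_le a x).trans (by gcongr; exact invWeight_le_inv ha x)) one_half_pos.le
  calc ‖x‖⁻¹ * |1 / 2 * lapWeight a x * energyCurrent 1 u j x|
      ≤ ‖x‖⁻¹ * (1 / 2 * (d * a⁻¹) * (‖u x‖ * √(gradNormSq u x))) := by
        rw [abs_mul]
        gcongr
    _ = 1 / 2 * (d * a⁻¹) * (‖x‖⁻¹ * ‖u x‖ * √(gradNormSq u x)) := by ring

lemma hasNegligibleFlux_mul_massCurrent (hu : IsFiniteEnergySolution V τ e u f) (hd : 2 < d)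
    (hV : IsRepulsive γ η V) (ha : 0 < a) :
    HasNegligibleFlux fun j x => (1 / 4 * gradLapWeight a x
      + 1 / 2 * ((V x - τ) * invWeight a x)) * massCurrent u j x := by
  have h_contDiff : ContDiffOn ℝ 1 (fun x => 1 / 4 * gradLapWeight a x
      + 1 / 2 * ((V x - τ) * invWeight a x)) {0}ᶜ :=
    (contDiff_const.mul (contDiff_gradLapWeight ha)).contDiffOn.add
      (contDiffOn_const.mul ((hV.contDiffOn.sub contDiffOn_const).mul
        (contDiff_invWeight ha).contDiffOn))
  refine .of_le (fun j => h_contDiff.mul (contDiff_massCurrent hu.contDiff j).contDiffOn)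
    (((hu.integrable_norm_sq.const_mul (1 / 4 * ((d + 4) * a⁻¹ ^ 3) + 1 / 2 * a⁻¹ * |τ|)).add
      ((hu.integrable_potential_mul_norm_sq hd hV.contDiffOn.continuousOn
        hV.nonneg).const_mul (1 / 2 * a⁻¹)))) fun j x hx => ?_
  have h_inv := invWeight_nonneg a x
  have h_inv_le := invWeight_le_inv ha x
  have h_factor : |1 / 4 * gradLapWeight a x + 1 / 2 * ((V x - τ) * invWeight a x)| ≤
      1 / 4 * ((d + 4) * a⁻¹ ^ 3) + 1 / 2 * ((V x + |τ|) * a⁻¹) := by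
    refine (abs_add_le _ _).trans ?_
    rw [abs_mul, abs_mul (1 / 2), abs_mul (V x - τ), abs_of_nonneg h_inv,
      abs_of_pos (one_half_pos (α := ℝ)), abs_of_pos (by norm_num : (0 : ℝ) < 1 / 4)]
    have h_V : |V x - τ| ≤ V x + |τ| := (abs_sub _ _).trans_eq (by rw [abs_of_nonneg (hV.nonneg x)])
    have h_V_nonneg := add_nonneg (hV.nonneg x) (abs_nonneg τ)
    gcongr
    exact (abs_gradLapWeight_le a x).trans (by gcongr)
  have h_mass : ‖x‖⁻¹ * |massCurrent u j x| ≤ ‖u x‖ ^ 2 := by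
    rw [massCurrent, abs_mul, abs_of_nonneg (sq_nonneg ‖u x‖), ← mul_assoc]
    exact mul_le_of_le_one_left (sq_nonneg _)
      (inv_mul_le_one_of_le₀ (PiLp.norm_apply_le x j) (norm_nonneg x))
  rw [abs_mul, mul_left_comm]
  refine (mul_le_mul h_factor h_mass (by positivity) ((abs_nonneg _).trans h_factor)).trans_eq ?_
  simp only [Pi.add_apply]
  ring

lemma hasNegligibleFlux_morawetzCurrent (hu : IsFiniteEnergySolution V τ e u f) (hd : 2 < d)
    (hV : IsRepulsive γ η V) (ha : 0 < a) :
    HasNegligibleFlux (morawetzCurrent a (fun x => V x - τ) u) :=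
  ((hu.hasNegligibleFlux_invWeight_mul_pohozaevCurrent ha).add
    (hu.hasNegligibleFlux_lapWeight_mul_energyCurrent hd ha)).sub
    (hu.hasNegligibleFlux_mul_massCurrent hd hV ha)

lemma integrable_morawetzDensity_and_integral_le (hu : IsFiniteEnergySolution V τ e u f)
    (hV : IsRepulsive γ η V) (hd : 3 < d) (hγ : 0 < γ) (hη : η ≤ 1) (ha : 0 < a) :
    Integrable (morawetzDensity γ a V u) ∧ ∫ x, morawetzDensity γ a V u x ≤
      (1 - η) * hardyConst d * (∫ x, (‖x‖ ^ 3)⁻¹ * ‖u x‖ ^ 2) + ∫ x, sourceDensity e u f x := by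
  have h_weight := (contDiff_invWeight (d := d) ha).continuous
  have h_grad := (contDiff_gradNormSq hu.contDiff).continuous
  have h_sq := hu.continuous.norm.pow 2
  have h_mass := (hu.integrable_inv_norm_cube_mul hd).const_mul ((1 - η) * hardyConst d)
  have h_source := hu.integrable_sourceDensity (by omega)
  rw [← integral_const_mul, ← integral_add h_mass h_source]
  refine (hu.hasNegligibleFlux_morawetzCurrent (by omega) hV ha).integral_le_integral ?_
    (fun x _ => hV.morawetzDensity_nonneg hd hγ a u x) (h_mass.add h_source)
    fun x hx => hu.morawetzDensity_sub_le_divergence hV hd hη ha hx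
  exact (((continuous_const.mul (h_weight.pow 3)).mul h_grad).continuousOn.add
    ((continuousOn_const.mul (h_weight.continuousOn.mul hV.contDiffOn.continuousOn)).mul
      h_sq.continuousOn)).add ((continuous_const.mul (h_weight.pow 3)).mul h_sq).continuousOn

/-- The Morawetz estimate in the limit `a → 0`, where `ψ x = ‖x‖`. -/
lemma integrable_and_integral_weighted_le (hu : IsFiniteEnergySolution V τ e u f)
    (hV : IsRepulsive γ η V) (hd : 3 < d) (hγ : 0 < γ) (hη : η ≤ 1) :
    Integrable (fun x => ‖x‖⁻¹ * V x * ‖u x‖ ^ 2) ∧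
      γ / 2 * (∫ x, ‖x‖⁻¹ * V x * ‖u x‖ ^ 2)
        + η * hardyConst d * (∫ x, (‖x‖ ^ 3)⁻¹ * ‖u x‖ ^ 2) ≤ ∫ x, sourceDensity e u f x := by
  have h_cube := (hu.integrable_inv_norm_cube_mul hd).const_mul (hardyConst d)
  have h_scale (n : ℕ) := hu.integrable_morawetzDensity_and_integral_le hV hd hγ hη
    (Nat.one_div_pos_of_nat (α := ℝ) (n := n))
  obtain ⟨h_int, h_le⟩ := integrable_and_integral_le_of_tendsto
    (h := fun x => γ / 2 * (‖x‖⁻¹ * V x * ‖u x‖ ^ 2)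
      + hardyConst d * ((‖x‖ ^ 3)⁻¹ * ‖u x‖ ^ 2))
    (fun n => (h_scale n).1)
    (fun n => ae_of_all _ (hV.morawetzDensity_nonneg hd hγ _ u))
    (fun K' hK' => Eventually.of_forall fun n => (h_scale n).2.trans hK'.le)
    (by filter_upwards [Measure.ae_ne volume (0 : Ed d)] with x hx
        using tendsto_morawetzDensity tendsto_one_div_add_atTop_nhds_zero_nat hx)
  have h_pot : Integrable fun x => ‖x‖⁻¹ * V x * ‖u x‖ ^ 2 := by
    refine (integrable_const_mul_iff (half_pos hγ).ne'.isUnit _).1 ?_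
    exact (h_int.sub h_cube).congr (ae_of_all _ fun x => add_sub_cancel_right _ _)
  refine ⟨h_pot, ?_⟩
  rw [integral_add (h_pot.const_mul _) h_cube, integral_const_mul, integral_const_mul] at h_le
  linarith

lemma integral_inv_norm_mul_potential_le (hu : IsFiniteEnergySolution V τ e u f)
    (hV : IsRepulsive γ η V) (hd : 3 < d) (hγ : 0 < γ) (hη : 0 < η) (hη_le : η ≤ 1) :
    ∫ x, ‖x‖⁻¹ * V x * ‖u x‖ ^ 2 ≤ 2 / γ * ∫ x, sourceDensity e u f x := by
  have h_weighted := (hu.integrable_and_integral_weighted_le hV hd hγ hη_le).2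
  have h_mass : 0 ≤ η * hardyConst d * ∫ x, (‖x‖ ^ 3)⁻¹ * ‖u x‖ ^ 2 :=
    mul_nonneg (mul_pos hη (hardyConst_pos hd)).le (integral_nonneg fun x => by positivity)
  rw [div_mul_eq_mul_div, le_div_iff₀ hγ]
  linarith

lemma integral_inv_norm_cube_mul_le (hu : IsFiniteEnergySolution V τ e u f) (hV : IsRepulsive γ η V)
    (hd : 3 < d) (hγ : 0 < γ) (hη : 0 < η) (hη_le : η ≤ 1) :
    ∫ x, (‖x‖ ^ 3)⁻¹ * ‖u x‖ ^ 2 ≤ (η * hardyConst d)⁻¹ * ∫ x, sourceDensity e u f x := by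
  have h_weighted := (hu.integrable_and_integral_weighted_le hV hd hγ hη_le).2
  have h_pot : 0 ≤ γ / 2 * ∫ x, ‖x‖⁻¹ * V x * ‖u x‖ ^ 2 :=
    mul_nonneg (half_pos hγ).le (integral_nonneg fun x => by
      have := hV.nonneg x
      positivity)
  rw [le_inv_mul_iff₀ (mul_pos hη (hardyConst_pos hd))]
  linarith

/-- The Morawetz estimate at the scale `a = R`. -/
lemma inv_mul_setIntegral_gradNormSq_le (hu : IsFiniteEnergySolution V τ e u f)
    (hV : IsRepulsive γ η V) (hd : 3 < d) (hγ : 0 < γ) (hη : 0 < η) (hη_le : η ≤ 1) {R : ℝ}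
    (hR : 0 < R) :
    R⁻¹ * ∫ x in ball 0 R, gradNormSq u x ≤ 4 / η * ∫ x, sourceDensity e u f x := by
  obtain ⟨h_int, h_le⟩ := hu.integrable_morawetzDensity_and_integral_le hV hd hγ hη_le hR
  have h_mass := hu.integral_inv_norm_cube_mul_le hV hd hγ hη hη_le
  rw [mul_comm η, mul_inv, mul_assoc, le_inv_mul_iff₀ (hardyConst_pos hd)] at h_mass
  have h_local : (4 * R)⁻¹ * ∫ x in ball 0 R, gradNormSq u x ≤
      ∫ x, morawetzDensity γ R V u x := by
    rw [← integral_const_mul]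
    refine (setIntegral_mono_on (hu.integrable_gradNormSq.integrableOn.const_mul _)
      h_int.integrableOn measurableSet_ball fun x hx => ?_).trans
      (setIntegral_le_integral h_int (ae_of_all _ (hV.morawetzDensity_nonneg hd hγ R u)))
    have h_inv := invWeight_nonneg R x
    have h_V := hV.nonneg x
    have h_const := (hardyConst_pos hd).le
    have h_scale := mul_le_mul_of_nonneg_right (inv_four_mul_le_sq_mul_invWeight_cube hR
      (mem_ball_zero_iff.1 hx).le) (gradNormSq_nonneg u x)
    rw [morawetzDensity, add_assoc]
    exact le_add_of_le_of_nonneg h_scale (by positivity)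
  calc R⁻¹ * ∫ x in ball 0 R, gradNormSq u x
      = 4 * ((4 * R)⁻¹ * ∫ x in ball 0 R, gradNormSq u x) := by rw [mul_inv]; ring
    _ ≤ 4 * ((1 - η) * (hardyConst d * ∫ x, (‖x‖ ^ 3)⁻¹ * ‖u x‖ ^ 2)
          + ∫ x, sourceDensity e u f x) := by
        rw [← mul_assoc (1 - η)]
        gcongr
        exact h_local.trans h_le
    _ ≤ 4 * ((1 - η) * (η⁻¹ * ∫ x, sourceDensity e u f x) + ∫ x, sourceDensity e u f x) := by
        have := sub_nonneg.2 hη_le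
        gcongr
    _ = 4 / η * ∫ x, sourceDensity e u f x := by field_simp; ring

end IsFiniteEnergySolution

section Duality

variable {d : ℕ}

lemma measurableSet_shell (d : ℕ) (j : ℤ) : MeasurableSet (shell d j) :=
  (measurableSet_lt measurable_const measurable_norm).inter
    (measurableSet_le measurable_norm measurable_const)

lemma iUnion_shell (d : ℕ) : ⋃ j, shell d j = {0}ᶜ := by
  ext x
  simp only [mem_iUnion, mem_compl_singleton_iff]
  refine ⟨?_, fun hx => ?_⟩
  · rintro ⟨j, hj, -⟩ rfl
    exact absurd hj (by simpa using (zpow_pos two_pos j).le)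
  · exact exists_mem_Ioc_zpow (norm_pos_iff.2 hx) one_lt_two

lemma setLIntegral_shell_le_nX2 (g : Ed d → ℝ≥0∞) (j : ℤ) :
    ∫⁻ x in shell d j, g x ≤ ENNReal.ofReal ((2 : ℝ) ^ (j + 1)) * (2 * nX2 g) := by
  have h_pos : (0 : ℝ) < 2 ^ (j + 1) * 2 := by positivity
  have h_sub : shell d j ⊆ ball 0 ((2 : ℝ) ^ (j + 1) * 2) := fun x hx => by
    rw [mem_ball_zero_iff]
    exact hx.2.trans_lt (lt_mul_of_one_lt_right (by positivity) one_lt_two)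
  calc ∫⁻ x in shell d j, g x ≤ ∫⁻ x in ball 0 ((2 : ℝ) ^ (j + 1) * 2), g x :=
        lintegral_mono_set h_sub
    _ ≤ ENNReal.ofReal (2 ^ (j + 1) * 2) * nX2 g := by
        rw [← ENNReal.inv_mul_le_iff (by simpa using h_pos) ENNReal.ofReal_ne_top]
        exact le_iSup₂ (f := fun (R : ℝ) (_ : 0 < R) =>
          (ENNReal.ofReal R)⁻¹ * ∫⁻ x in ball (0 : Ed d) R, g x) _ h_pos
    _ = ENNReal.ofReal (2 ^ (j + 1)) * (2 * nX2 g) := by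
        rw [ENNReal.ofReal_mul (by positivity), ENNReal.ofReal_ofNat, mul_assoc]

lemma setLIntegral_mul_le_of_shell {p q : Ed d → ℝ≥0∞} (hp : AEMeasurable p) (hq : AEMeasurable q)
    {K : ℝ≥0∞} {j : ℤ}
    (hK : ∫⁻ x in shell d j, q x ^ 2 ≤ ENNReal.ofReal ((2 : ℝ) ^ (j + 1)) * K) :
    ∫⁻ x in shell d j, p x * q x ≤
      (ENNReal.ofReal ((2 : ℝ) ^ (j + 1)) * ∫⁻ x in shell d j, p x ^ 2) ^ (1 / 2 : ℝ)
        * K ^ (1 / 2 : ℝ) := by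
  have h_holder := ENNReal.lintegral_mul_le_Lp_mul_Lq (volume.restrict (shell d j))
    Real.HolderConjugate.two_two hp.restrict hq.restrict
  simp only [Pi.mul_apply, ENNReal.rpow_two] at h_holder
  calc ∫⁻ x in shell d j, p x * q x
      ≤ (∫⁻ x in shell d j, p x ^ 2) ^ (1 / 2 : ℝ)
        * (ENNReal.ofReal ((2 : ℝ) ^ (j + 1)) * K) ^ (1 / 2 : ℝ) := h_holder.trans (by gcongr)
    _ = (ENNReal.ofReal ((2 : ℝ) ^ (j + 1)) * ∫⁻ x in shell d j, p x ^ 2) ^ (1 / 2 : ℝ)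
        * K ^ (1 / 2 : ℝ) := by
      simp only [ENNReal.mul_rpow_of_nonneg _ _ one_half_pos.le]
      ring

variable [NeZero d]

lemma lintegral_mul_le_nXstar_mul {p q : Ed d → ℝ≥0∞} (hp : AEMeasurable p) (hq : AEMeasurable q)
    {K : ℝ≥0∞} (hK : ∀ j : ℤ, ∫⁻ x in shell d j, q x ^ 2 ≤ ENNReal.ofReal ((2 : ℝ) ^ (j + 1)) * K) :
    ∫⁻ x, p x * q x ≤ nXstar (fun x => p x ^ 2) * K ^ (1 / 2 : ℝ) := by
  have h_ae : ∀ᵐ x : Ed d, x ∈ ⋃ j, shell d j := by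
    rw [iUnion_shell]
    exact Measure.ae_ne volume 0
  calc ∫⁻ x, p x * q x = ∫⁻ x in ⋃ j, shell d j, p x * q x := by
        rw [Measure.restrict_eq_self_of_ae_mem h_ae]
    _ ≤ ∑' j, ∫⁻ x in shell d j, p x * q x := lintegral_iUnion_le _ _
    _ ≤ nXstar (fun x => p x ^ 2) * K ^ (1 / 2 : ℝ) := by
        rw [nXstar, ← ENNReal.tsum_mul_right]
        exact ENNReal.tsum_le_tsum fun j => setLIntegral_mul_le_of_shell hp hq (hK j)

lemma lintegral_mul_le_nXstar_mul_nX2 {p q : Ed d → ℝ≥0∞} (hp : AEMeasurable p)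
    (hq : AEMeasurable q) :
    ∫⁻ x, p x * q x ≤ nXstar (fun x => p x ^ 2) * (2 * nX2 fun x => q x ^ 2) ^ (1 / 2 : ℝ) :=
  lintegral_mul_le_nXstar_mul hp hq (setLIntegral_shell_le_nX2 _)

lemma lintegral_mul_inv_norm_mul_le_nXstar_mul {p q : Ed d → ℝ≥0∞} (hp : AEMeasurable p)
    (hq : AEMeasurable q) :
    ∫⁻ x, p x * (‖x‖ₑ⁻¹ * q x) ≤
      nXstar (fun x => p x ^ 2) * (∫⁻ x, q x ^ 2 / ENNReal.ofReal (‖x‖ ^ 3)) ^ (1 / 2 : ℝ) := by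
  refine lintegral_mul_le_nXstar_mul hp (measurable_enorm.inv.aemeasurable.mul hq) fun j => ?_
  rw [← lintegral_const_mul' _ _ ENNReal.ofReal_ne_top]
  refine (setLIntegral_mono' (measurableSet_shell d j) fun x hx => ?_).trans
    (setLIntegral_le_lintegral _ _)
  have h_pos : 0 < ‖x‖ := (zpow_pos two_pos j).trans hx.1
  have h_ne : ‖x‖ₑ ≠ 0 := enorm_ne_zero.2 (norm_pos_iff.1 h_pos)
  calc (‖x‖ₑ⁻¹ * q x) ^ 2 = ‖x‖ₑ * (q x ^ 2 / ‖x‖ₑ ^ 3) := by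
        rw [mul_pow, ENNReal.div_eq_inv_mul, pow_succ' _ 2, ENNReal.mul_inv (.inl h_ne)
          (.inl enorm_ne_top), ← mul_assoc, ENNReal.mul_inv_cancel_left h_ne enorm_ne_top,
          ENNReal.inv_pow]
    _ ≤ ENNReal.ofReal (2 ^ (j + 1)) * (q x ^ 2 / ENNReal.ofReal (‖x‖ ^ 3)) := by
        rw [ENNReal.ofReal_pow (norm_nonneg x), ofReal_norm]
        gcongr
        rw [← ofReal_norm]
        exact ENNReal.ofReal_le_ofReal hx.2

end Duality

section Absorption

lemma le_of_le_mul_sqrt_add {L K N g m h D θ : ℝ} (hg : 0 ≤ g) (hm : 0 ≤ m) (hh : 0 ≤ h)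
    (hθ : 0 ≤ θ) (hL : L ≤ K * (N * √(2 * g) + D * (N * √m) + √θ * (N * √(2 * h))))
    (hgL : g ≤ L) (hmL : m ≤ L) :
    L ≤ K ^ 2 * (12 + 2 * D ^ 2) * N ^ 2 + 1 / 4 * θ * h := by
  have young_g : K * N * √(2 * g) ≤ g / 4 + 2 * K ^ 2 * N ^ 2 := by
    linear_combination 2 * sq_nonneg (K * N - √(2 * g) / 4)
      + Real.sq_sqrt (by positivity : 0 ≤ 2 * g) / 8
  have young_m : K * D * N * √m ≤ m / 4 + K ^ 2 * D ^ 2 * N ^ 2 := by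
    linear_combination sq_nonneg (K * D * N - √m / 2) + Real.sq_sqrt hm / 4
  have young_h : K * √θ * N * √(2 * h) ≤ θ * h / 8 + 4 * K ^ 2 * N ^ 2 := by
    have h_sq : (√θ * √(2 * h)) ^ 2 = 2 * (θ * h) := by
      rw [mul_pow, Real.sq_sqrt hθ, Real.sq_sqrt (by positivity)]; ring
    linear_combination 4 * sq_nonneg (K * N - √θ * √(2 * h) / 8) + h_sq / 16
  linarith

lemma le_of_le_ofReal_mul_rpow_add {L N g m h : ℝ≥0∞} {K D θ : ℝ} (hK : 0 < K) (hD : 0 ≤ D)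
    (hθ : 0 < θ) (hL_top : L ≠ ⊤)
    (hL : L ≤ ENNReal.ofReal K * (N * (2 * g) ^ (1 / 2 : ℝ)
      + ENNReal.ofReal D * (N * m ^ (1 / 2 : ℝ))
      + ENNReal.ofReal √θ * (N * (2 * h) ^ (1 / 2 : ℝ)))) (hgL : g ≤ L) (hmL : m ≤ L) :
    L ≤ ENNReal.ofReal (K ^ 2 * (12 + 2 * D ^ 2)) * N ^ 2 + ENNReal.ofReal (1 / 4 * θ) * h := by
  have h_const : ENNReal.ofReal (K ^ 2 * (12 + 2 * D ^ 2)) ≠ 0 :=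
    (ENNReal.ofReal_pos.2 (by positivity)).ne'
  have h_quarter : ENNReal.ofReal (1 / 4 * θ) ≠ 0 := (ENNReal.ofReal_pos.2 (by positivity)).ne'
  obtain rfl | hN := eq_or_ne N ⊤
  · simp [h_const]
  obtain rfl | hh := eq_or_ne h ⊤
  · simp only [ENNReal.mul_top h_quarter, add_top, le_top]
  lift L to NNReal using hL_top
  lift g to NNReal using ne_top_of_le_ne_top ENNReal.coe_ne_top hgL
  lift m to NNReal using ne_top_of_le_ne_top ENNReal.coe_ne_top hmL
  lift N to NNReal using hN
  lift h to NNReal using hh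
  have hL_real : (L : ℝ) ≤ K * (N * √(2 * g) + D * (N * √m) + √θ * (N * √(2 * h))) := by
    have h_toReal := ENNReal.toReal_mono (by finiteness) hL
    rw [ENNReal.toReal_mul, ENNReal.toReal_add, ENNReal.toReal_add] at h_toReal
    · simpa [← ENNReal.toReal_rpow, Real.sqrt_eq_rpow, ENNReal.toReal_ofReal, hK.le, hD, hθ.le,
        Real.rpow_nonneg] using h_toReal
    all_goals finiteness
  rw [← ENNReal.ofReal_coe_nnreal]
  refine (ENNReal.ofReal_le_ofReal (le_of_le_mul_sqrt_add g.coe_nonneg m.coe_nonneg h.coe_nonneg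
    hθ.le hL_real (ENNReal.coe_le_coe.1 hgL) (ENNReal.coe_le_coe.1 hmL))).trans_eq ?_
  rw [ENNReal.ofReal_add (by positivity) (by positivity), ENNReal.ofReal_mul (by positivity),
    ENNReal.ofReal_mul (q := (h : ℝ)) (by positivity)]
  simp [ENNReal.ofReal_pow]

end Absorption

section MorreyCampanato

variable {d : ℕ} {V : Ed d → ℝ} {u f : Ed d → ℂ} {γ η τ e : ℝ}

lemma ofReal_norm_sq (u : Ed d → ℂ) (x : Ed d) : ENNReal.ofReal (‖u x‖ ^ 2) = usq u x := by
  rw [ENNReal.ofReal_pow (norm_nonneg _), ofReal_norm]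
  rfl

lemma ofReal_gradNormSq (u : Ed d → ℂ) (x : Ed d) :
    ENNReal.ofReal (gradNormSq u x) = gradSq u x := by
  rw [gradNormSq, ENNReal.ofReal_sum_of_nonneg fun j _ => sq_nonneg _]
  exact Finset.sum_congr rfl fun j _ => ofReal_norm_sq (pd u j) x

lemma ofReal_integral_norm_mul {g : Ed d → ℝ} (hg : 0 ≤ g)
    (h_int : Integrable fun x => ‖f x‖ * g x) :
    ENNReal.ofReal (∫ x, ‖f x‖ * g x) = ∫⁻ x, ‖f x‖ₑ * ENNReal.ofReal (g x) := by
  rw [ofReal_integral_eq_lintegral_ofReal h_int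
    (ae_of_all _ fun x => mul_nonneg (norm_nonneg _) (hg x))]
  simp only [ENNReal.ofReal_mul (norm_nonneg _), ofReal_norm]

lemma iSup_setLIntegral_ball_le_lintegral_div_norm_cube (g : Ed d → ℝ≥0∞) :
    ⨆ (R : ℝ) (_ : 0 < R), (ENNReal.ofReal (R ^ 3))⁻¹ * ∫⁻ x in ball (0 : Ed d) R, g x ≤
      ∫⁻ x, g x / ENNReal.ofReal (‖x‖ ^ 3) := by
  refine iSup₂_le fun R hR => ?_
  have h_ne_top : (ENNReal.ofReal (R ^ 3))⁻¹ ≠ ⊤ :=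
    ENNReal.inv_ne_top.2 (ENNReal.ofReal_pos.2 (by positivity)).ne'
  rw [← lintegral_const_mul' _ _ h_ne_top]
  refine (setLIntegral_mono' measurableSet_ball fun x hx => ?_).trans
    (setLIntegral_le_lintegral _ _)
  rw [ENNReal.div_eq_inv_mul]
  gcongr
  exact (mem_ball_zero_iff.1 hx).le

/-- The constant bounding the left-hand side of the resolvent estimate by `∫ sourceDensity`. -/
def morawetzConst (d : ℕ) (γ η : ℝ) : ℝ :=
  4 / η + 2 / γ + ((d : ℝ) - 2) * (η * hardyConst d)⁻¹

lemma morawetzConst_pos (hd : 3 < d) (hγ : 0 < γ) (hη : 0 < η) : 0 < morawetzConst d γ η := by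
  have h_dim : (0 : ℝ) < d - 2 := by
    have : (3 : ℝ) < d := by exact_mod_cast hd
    linarith
  have h_const := hardyConst_pos hd
  unfold morawetzConst
  positivity

/-- The left-hand side of the resolvent estimate: the sum of the local energies and of the weighted
`L²` norms which the Morawetz multipliers control. -/
def morawetzNorm (V : Ed d → ℝ) (u : Ed d → ℂ) : ℝ≥0∞ :=
  nX2 (gradSq u)
    + (∫⁻ x, ENNReal.ofReal (V x / ‖x‖) * usq u x)
    + (⨆ (R : ℝ) (_ : 0 < R), (ENNReal.ofReal (R ^ 3))⁻¹ * ∫⁻ x in ball (0 : Ed d) R, usq u x)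
    + ENNReal.ofReal ((d : ℝ) - 3) * (∫⁻ x, usq u x / ENNReal.ofReal (‖x‖ ^ 3))

lemma nX2_gradSq_le_morawetzNorm (V : Ed d → ℝ) (u : Ed d → ℂ) :
    nX2 (gradSq u) ≤ morawetzNorm V u :=
  le_self_add.trans (le_self_add.trans le_self_add)

lemma lintegral_usq_div_norm_cube_le_morawetzNorm (hd : 3 < d) (V : Ed d → ℝ) (u : Ed d → ℂ) :
    ∫⁻ x, usq u x / ENNReal.ofReal (‖x‖ ^ 3) ≤ morawetzNorm V u := by
  refine le_add_left (le_mul_of_one_le_left' ?_)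
  rw [ENNReal.one_le_ofReal, le_sub_iff_add_le]
  norm_num
  exact_mod_cast hd

lemma memLp_two_of_lintegral_enorm_sq_lt_top {α F : Type*} [MeasurableSpace α] {μ : Measure α}
    [NormedAddCommGroup F] {g : α → F} (hg_meas : AEStronglyMeasurable g μ)
    (hg : ∫⁻ x, ‖g x‖ₑ ^ 2 ∂μ < ⊤) : MemLp g 2 μ := by
  refine ⟨hg_meas, ?_⟩
  rw [eLpNorm_lt_top_iff_lintegral_rpow_enorm_lt_top two_ne_zero ENNReal.ofNat_ne_top]
  simpa using hg

variable [NeZero d]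

lemma lintegral_usq_div_norm_cube (u : Ed d → ℂ) :
    ∫⁻ x, usq u x / ENNReal.ofReal (‖x‖ ^ 3) =
      ∫⁻ x, ENNReal.ofReal ((‖x‖ ^ 3)⁻¹ * ‖u x‖ ^ 2) := by
  refine lintegral_congr_ae ?_
  filter_upwards [Measure.ae_ne volume (0 : Ed d)] with x hx
  have := norm_pos_iff.2 hx
  rw [← ofReal_norm_sq, ← ENNReal.ofReal_div_of_pos (by positivity), div_eq_inv_mul]

namespace IsFiniteEnergySolution

lemma nX2_gradSq_le (hu : IsFiniteEnergySolution V τ e u f) (hV : IsRepulsive γ η V) (hd : 3 < d)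
    (hγ : 0 < γ) (hη : 0 < η) (hη_le : η ≤ 1) :
    nX2 (gradSq u) ≤ ENNReal.ofReal (4 / η * ∫ x, sourceDensity e u f x) := by
  refine iSup₂_le fun R hR => ?_
  have h_ball : ∫⁻ x in ball (0 : Ed d) R, gradSq u x =
      ENNReal.ofReal (∫ x in ball 0 R, gradNormSq u x) := by
    rw [ofReal_integral_eq_lintegral_ofReal hu.integrable_gradNormSq.integrableOn
      (ae_of_all _ (gradNormSq_nonneg u))]
    simp only [ofReal_gradNormSq]
  rw [h_ball, ← ENNReal.ofReal_inv_of_pos hR, ← ENNReal.ofReal_mul (inv_nonneg.2 hR.le)]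
  exact ENNReal.ofReal_le_ofReal (hu.inv_mul_setIntegral_gradNormSq_le hV hd hγ hη hη_le hR)

lemma lintegral_potential_div_norm_mul_usq_le (hu : IsFiniteEnergySolution V τ e u f)
    (hV : IsRepulsive γ η V) (hd : 3 < d) (hγ : 0 < γ) (hη : 0 < η) (hη_le : η ≤ 1) :
    ∫⁻ x, ENNReal.ofReal (V x / ‖x‖) * usq u x ≤
      ENNReal.ofReal (2 / γ * ∫ x, sourceDensity e u f x) := by
  have h_weight (x : Ed d) : 0 ≤ ‖x‖⁻¹ * V x := mul_nonneg (by positivity) (hV.nonneg x)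
  calc ∫⁻ x, ENNReal.ofReal (V x / ‖x‖) * usq u x
      = ∫⁻ x, ENNReal.ofReal (‖x‖⁻¹ * V x * ‖u x‖ ^ 2) := by
        simp only [ENNReal.ofReal_mul (h_weight _), ofReal_norm_sq, div_eq_inv_mul]
    _ = ENNReal.ofReal (∫ x, ‖x‖⁻¹ * V x * ‖u x‖ ^ 2) :=
        (ofReal_integral_eq_lintegral_ofReal
          (hu.integrable_and_integral_weighted_le hV hd hγ hη_le).1
          (ae_of_all _ fun x => mul_nonneg (h_weight x) (sq_nonneg _))).symm
    _ ≤ ENNReal.ofReal (2 / γ * ∫ x, sourceDensity e u f x) :=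
        ENNReal.ofReal_le_ofReal (hu.integral_inv_norm_mul_potential_le hV hd hγ hη hη_le)

lemma lintegral_usq_div_norm_cube_le (hu : IsFiniteEnergySolution V τ e u f)
    (hV : IsRepulsive γ η V) (hd : 3 < d) (hγ : 0 < γ) (hη : 0 < η) (hη_le : η ≤ 1) :
    ∫⁻ x, usq u x / ENNReal.ofReal (‖x‖ ^ 3) ≤
      ENNReal.ofReal ((η * hardyConst d)⁻¹ * ∫ x, sourceDensity e u f x) := by
  rw [lintegral_usq_div_norm_cube, ← ofReal_integral_eq_lintegral_ofReal
    (hu.integrable_inv_norm_cube_mul hd) (ae_of_all _ fun x => by positivity)]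
  exact ENNReal.ofReal_le_ofReal (hu.integral_inv_norm_cube_mul_le hV hd hγ hη hη_le)

lemma morawetzNorm_le (hu : IsFiniteEnergySolution V τ e u f) (hV : IsRepulsive γ η V) (hd : 3 < d)
    (hγ : 0 < γ) (hη : 0 < η) (hη_le : η ≤ 1) :
    morawetzNorm V u ≤
      ENNReal.ofReal (morawetzConst d γ η) * ENNReal.ofReal (∫ x, sourceDensity e u f x) := by
  have h_dim : (0 : ℝ) < d - 3 := sub_pos.2 (by exact_mod_cast hd)
  have h_hardy := hardyConst_pos hd
  have h_cube := hu.lintegral_usq_div_norm_cube_le hV hd hγ hη hη_le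
  set s := ∫ x, sourceDensity e u f x
  have h_sum : morawetzNorm V u ≤ ENNReal.ofReal (4 / η * s) + ENNReal.ofReal (2 / γ * s)
      + ENNReal.ofReal ((η * hardyConst d)⁻¹ * s)
      + ENNReal.ofReal (d - 3) * ENNReal.ofReal ((η * hardyConst d)⁻¹ * s) := by
    unfold morawetzNorm
    gcongr
    · exact hu.nX2_gradSq_le hV hd hγ hη hη_le
    · exact hu.lintegral_potential_div_norm_mul_usq_le hV hd hγ hη hη_le
    · exact (iSup_setLIntegral_ball_le_lintegral_div_norm_cube _).trans h_cube
  refine h_sum.trans_eq ?_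
  rw [ENNReal.ofReal_mul (by positivity : 0 ≤ 4 / η),
    ENNReal.ofReal_mul (by positivity : 0 ≤ 2 / γ),
    ENNReal.ofReal_mul (by positivity : 0 ≤ (η * hardyConst d)⁻¹), ← mul_assoc,
    ← ENNReal.ofReal_mul h_dim.le, ← add_mul, ← add_mul, ← add_mul,
    ← ENNReal.ofReal_add (by positivity) (by positivity),
    ← ENNReal.ofReal_add (by positivity) (by positivity),
    ← ENNReal.ofReal_add (by positivity) (by positivity), morawetzConst]
  congr 2
  ring

lemma integral_sourceDensity_le (hu : IsFiniteEnergySolution V τ e u f) (hV : IsRepulsive γ η V)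
    (hd : 2 < d) :
    ∫ x, sourceDensity e u f x ≤ (∫ x, ‖f x‖ * √(gradNormSq u x))
      + (d : ℝ) / 2 * (∫ x, ‖f x‖ * (‖x‖⁻¹ * ‖u x‖))
      + √(|e| + max 0 τ) * ∫ x, ‖f x‖ * ‖u x‖ := by
  have h_grad : Integrable fun x => ‖f x‖ * √(gradNormSq u x) :=
    hu.memLp_source.norm.integrable_mul hu.memLp_grad
  have h_inv : Integrable fun x => (d : ℝ) / 2 * (‖f x‖ * (‖x‖⁻¹ * ‖u x‖)) :=
    (hu.memLp_source.norm.integrable_mul (hu.memLp_inv_norm_mul hd)).const_mul _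
  have h_abs : Integrable fun x => |e| * (‖u x‖ * √(gradNormSq u x)) :=
    (hu.memLp.norm.integrable_mul hu.memLp_grad).const_mul _
  have h_sum : ∫ x, sourceDensity e u f x = _ := integral_add (h_grad.add h_inv) h_abs
  rw [h_sum, integral_add h_grad h_inv, integral_const_mul, integral_const_mul]
  exact add_le_add_right (hu.abs_mul_integral_norm_mul_sqrt_gradNormSq_le hd
    hV.contDiffOn.continuousOn hV.nonneg) _

lemma ofReal_integral_source_mul_sqrt_gradNormSq_le (hu : IsFiniteEnergySolution V τ e u f) :
    ENNReal.ofReal (∫ x, ‖f x‖ * √(gradNormSq u x)) ≤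
      nXstar (usq f) * (2 * nX2 (gradSq u)) ^ (1 / 2 : ℝ) := by
  rw [ofReal_integral_norm_mul (fun x => Real.sqrt_nonneg _)
    (hu.memLp_source.norm.integrable_mul hu.memLp_grad)]
  refine (lintegral_mul_le_nXstar_mul_nX2 hu.memLp_source.1.enorm
    hu.memLp_grad.1.aemeasurable.ennreal_ofReal).trans_eq ?_
  simp only [← ENNReal.ofReal_pow (Real.sqrt_nonneg _), Real.sq_sqrt (gradNormSq_nonneg _ _),
    ofReal_gradNormSq]
  rfl

lemma ofReal_integral_source_mul_inv_norm_mul_le (hu : IsFiniteEnergySolution V τ e u f)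
    (hd : 2 < d) :
    ENNReal.ofReal (∫ x, ‖f x‖ * (‖x‖⁻¹ * ‖u x‖)) ≤ nXstar (usq f)
      * (∫⁻ x, usq u x / ENNReal.ofReal (‖x‖ ^ 3)) ^ (1 / 2 : ℝ) := by
  rw [ofReal_integral_norm_mul (fun x => by positivity)
    (hu.memLp_source.norm.integrable_mul (hu.memLp_inv_norm_mul hd))]
  refine (lintegral_congr_ae ?_).trans_le (lintegral_mul_inv_norm_mul_le_nXstar_mul
    hu.memLp_source.1.enorm hu.memLp.1.enorm)
  filter_upwards [Measure.ae_ne volume (0 : Ed d)] with x hx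
  rw [ENNReal.ofReal_mul (by positivity), ENNReal.ofReal_inv_of_pos (norm_pos_iff.2 hx),
    ofReal_norm, ofReal_norm]
  rfl

lemma ofReal_integral_source_mul_le (hu : IsFiniteEnergySolution V τ e u f) :
    ENNReal.ofReal (∫ x, ‖f x‖ * ‖u x‖) ≤
      nXstar (usq f) * (2 * nX2 (usq u)) ^ (1 / 2 : ℝ) := by
  rw [ofReal_integral_norm_mul (fun x => norm_nonneg _) hu.integrable_source_mul]
  simp only [ofReal_norm]
  exact lintegral_mul_le_nXstar_mul_nX2 hu.memLp_source.1.enorm hu.memLp.1.enorm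

lemma ofReal_integral_sourceDensity_le (hu : IsFiniteEnergySolution V τ e u f)
    (hV : IsRepulsive γ η V) (hd : 2 < d) :
    ENNReal.ofReal (∫ x, sourceDensity e u f x) ≤
      nXstar (usq f) * (2 * nX2 (gradSq u)) ^ (1 / 2 : ℝ)
      + ENNReal.ofReal ((d : ℝ) / 2) * (nXstar (usq f)
        * (∫⁻ x, usq u x / ENNReal.ofReal (‖x‖ ^ 3)) ^ (1 / 2 : ℝ))
      + ENNReal.ofReal √(|e| + max 0 τ) * (nXstar (usq f) * (2 * nX2 (usq u)) ^ (1 / 2 : ℝ)) := by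
  refine (ENNReal.ofReal_le_ofReal (hu.integral_sourceDensity_le hV hd)).trans ?_
  refine ENNReal.ofReal_add_le.trans (add_le_add (ENNReal.ofReal_add_le.trans (add_le_add
    hu.ofReal_integral_source_mul_sqrt_gradNormSq_le ?_)) ?_)
  · rw [ENNReal.ofReal_mul (by positivity)]
    gcongr
    exact hu.ofReal_integral_source_mul_inv_norm_mul_le hd
  · rw [ENNReal.ofReal_mul (by positivity)]
    gcongr
    exact hu.ofReal_integral_source_mul_le

lemma morawetzNorm_le_nXstar_sq_add (hu : IsFiniteEnergySolution V τ e u f) (hV : IsRepulsive γ η V)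
    (hd : 3 < d) (hγ : 0 < γ) (hη : 0 < η) (hη_le : η ≤ 1) (he : e ≠ 0) :
    morawetzNorm V u ≤
      ENNReal.ofReal (morawetzConst d γ η ^ 2 * (12 + 2 * ((d : ℝ) / 2) ^ 2)) * nXstar (usq f) ^ 2
        + ENNReal.ofReal (1 / 4 * (|e| + max 0 τ)) * nX2 (usq u) := by
  have h_le := hu.morawetzNorm_le hV hd hγ hη hη_le
  refine le_of_le_ofReal_mul_rpow_add (morawetzConst_pos hd hγ hη) (by positivity) (by positivity)
    (ne_top_of_le_ne_top (by finiteness) h_le) (h_le.trans ?_) (nX2_gradSq_le_morawetzNorm V u)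
    (lintegral_usq_div_norm_cube_le_morawetzNorm hd V u)
  gcongr
  exact hu.ofReal_integral_sourceDensity_le hV (by omega)

lemma of_classical (hV : ContDiffOn ℝ 1 V {0}ᶜ) (hu : ContDiff ℝ 2 u)
    (hu_sq : ∫⁻ x, usq u x < ⊤) (hgrad_sq : ∫⁻ x, gradSq u x < ⊤) (hf_sq : ∫⁻ x, usq f x < ⊤)
    (h_eq : ∀ x, -lap u x + (V x : ℂ) * u x + (e : ℂ) * Complex.I * u x - (τ : ℂ) * u x = f x) :
    IsFiniteEnergySolution V τ e u f := by
  have h_lap : Continuous (lap u) := continuous_finsetSum _ fun j _ =>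
    ((contDiff_pd hu j).continuous_fderiv one_ne_zero).clm_apply continuous_const
  have hf_meas : AEStronglyMeasurable f := by
    rw [← funext h_eq]
    refine aestronglyMeasurable_of_continuousOn_compl_singleton (a := 0) ?_
    have hu_cont := hu.continuous.continuousOn (s := {(0 : Ed d)}ᶜ)
    exact ((h_lap.neg.continuousOn.add ((Complex.continuous_ofReal.comp_continuousOn
      hV.continuousOn).mul hu_cont)).add (continuousOn_const.mul hu_cont)).sub
      (continuousOn_const.mul hu_cont)
  refine ⟨hu, fun x => ?_, ?_, ?_, ?_⟩
  · rw [← h_eq x, Complex.real_smul, Complex.real_smul]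
    push_cast
    ring
  · exact memLp_two_of_lintegral_enorm_sq_lt_top hu.continuous.aestronglyMeasurable hu_sq
  · refine memLp_two_of_lintegral_enorm_sq_lt_top
      (contDiff_gradNormSq hu).continuous.sqrt.aestronglyMeasurable ?_
    simpa only [Real.enorm_of_nonneg (Real.sqrt_nonneg _),
      ← ENNReal.ofReal_pow (Real.sqrt_nonneg _), Real.sq_sqrt (gradNormSq_nonneg _ _),
      ofReal_gradNormSq] using hgrad_sq
  · exact memLp_two_of_lintegral_enorm_sq_lt_top hf_meas hf_sq

end IsFiniteEnergySolution

end MorreyCampanato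

/-- intermediate a priori estimate (estimate (17) of the paper)
for the resolvent equation with a repulsive potential, d > 3. -/
theorem stmt_2 (d : ℕ) (hd : 3 < d) (γ η : ℝ) (hγ : 0 < γ) (hη : 0 < η) :
    ∃ C : ℝ, 0 < C ∧
      ∀ (V : Ed d → ℝ), (∀ x, 0 ≤ V x) → ContDiffOn ℝ 1 V ({(0 : Ed d)}ᶜ) →
      (∀ x : Ed d, x ≠ 0 →
        γ * V x + ‖x‖ * radialDeriv V x ≤ (1 - η) * ((d:ℝ) - 1) * ((d:ℝ) - 3) / (2 * ‖x‖^2)) →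
      ∀ (ε τ : ℝ), ε ≠ 0 →
      ∀ (σ : ℝ), σ = 1 ∨ σ = -1 →
      ∀ (u f : Ed d → ℂ), ContDiff ℝ 2 u →
      (∫⁻ x, usq u x) < ⊤ → (∫⁻ x, gradSq u x) < ⊤ → (∫⁻ x, usq f x) < ⊤ →
      (∀ x, -lap u x + (V x : ℂ) * u x + (σ : ℂ) * ((ε : ℂ) * Complex.I) * u x
        - (τ : ℂ) * u x = f x) →
      nX2 (gradSq u)
        + (∫⁻ x, ENNReal.ofReal (V x / ‖x‖) * usq u x)
        + (⨆ (R : ℝ) (_ : 0 < R),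
            (ENNReal.ofReal (R^3))⁻¹ * ∫⁻ x in ball (0 : Ed d) R, usq u x)
        + ENNReal.ofReal ((d:ℝ) - 3) * (∫⁻ x, usq u x / ENNReal.ofReal (‖x‖^3))
      ≤ ENNReal.ofReal C * (nXstar (usq f)) ^ 2
        + ENNReal.ofReal ((1/4) * (|ε| + max 0 τ)) * nX2 (usq u) := by
  have : NeZero d := ⟨by omega⟩
  have hη' : 0 < min η 1 := lt_min hη one_pos
  have hK := morawetzConst_pos hd hγ hη'
  refine ⟨morawetzConst d γ (min η 1) ^ 2 * (12 + 2 * ((d : ℝ) / 2) ^ 2), by positivity, ?_⟩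
  intro V hV_nonneg hV_diff hV_radial ε τ hε σ hσ u f hu hu_sq hgrad_sq hf_sq h_eq
  have hV : IsRepulsive γ (min η 1) V :=
    IsRepulsive.mono ⟨hV_nonneg, hV_diff, hV_radial⟩ hd.le (min_le_left η 1)
  have h_sol : IsFiniteEnergySolution V τ (σ * ε) u f :=
    .of_classical hV_diff hu hu_sq hgrad_sq hf_sq fun x => by
      rw [← h_eq x, Complex.ofReal_mul, mul_assoc (σ : ℂ)]
  have h_abs : |σ * ε| = |ε| := by rcases hσ with rfl | rfl <;> simp
  have he : σ * ε ≠ 0 := by rwa [← abs_ne_zero, h_abs, abs_ne_zero]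
  have h_est := h_sol.morawetzNorm_le_nXstar_sq_add hV hd hγ hη' (min_le_right η 1) he
  rwa [h_abs] at h_est
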